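/- arXiv:1910.14608 — 2 statements merged into one kernel-verified Lean document; each statement's English description precedes it below -/
import Mathlib

section
/- Let C be a 2-reduced dg coalgebra over ℚ and t : C ⇝ ΩC its universal twisting chain. Regarding ΩC as a left module over itself, the twisted coextension C ⊗^t ΩC is acyclic: the map ℚ → C ⊗^t ΩC sending 1 ↦ 1 ⊗ 1 is a quasi-isomorphism of chain complexes (in fact a chain deformation retraction onto its image). -/
open scoped TensorProduct

noncomputable section

/-- A homologically graded differential graded `ℚ`-vector space (chain complex of
`ℚ`-vector spaces presented as a graded module with a degree `-1` square-zero differential). -/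
structure DGVect : Type 1 where
  carrier : Type
  [isAddCommGroup : AddCommGroup carrier]
  [isModule : Module ℚ carrier]
  grading : ℤ → Submodule ℚ carrier
  [isDecomp : DirectSum.Decomposition grading]
  d : carrier →ₗ[ℚ] carrier
  d_mem : ∀ (n : ℤ), ∀ x ∈ grading n, d x ∈ grading (n - 1)
  d_sq : d.comp d = 0

attribute [instance] DGVect.isAddCommGroup DGVect.isModule DGVect.isDecomp

/-- The operator acting on the degree `n` graded component by `(-1)^(k*n)`. -/
def signOpOf {V : Type} [AddCommGroup V] [Module ℚ V] (g : ℤ → Submodule ℚ V)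
    [DirectSum.Decomposition g] (k : ℤ) : V →ₗ[ℚ] V :=
  (DirectSum.toModule ℚ ℤ V fun n => ((-1 : ℚ) ^ (k * n)) • (g n).subtype).comp
    (DirectSum.decomposeLinearEquiv g).toLinearMap

/-- The Koszul parity operator, acting by `(-1)^n` in degree `n`. -/
def parityOf {V : Type} [AddCommGroup V] [Module ℚ V] (g : ℤ → Submodule ℚ V)
    [DirectSum.Decomposition g] : V →ₗ[ℚ] V := signOpOf g 1

def DGVect.parity (V : DGVect) : V.carrier →ₗ[ℚ] V.carrier := parityOf V.grading

/-- A graded object is bounded below if it vanishes in all sufficiently negative degrees. -/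
def DGVect.BoundedBelow (V : DGVect) : Prop := ∃ b : ℤ, ∀ n : ℤ, n < b → V.grading n = ⊥

/-- The Koszul signed braiding `v ⊗ w ↦ (-1)^{|v||w|} w ⊗ v` of graded vector spaces. -/
def kSwapOf {V W : Type} [AddCommGroup V] [Module ℚ V] [AddCommGroup W] [Module ℚ W]
    (gV : ℤ → Submodule ℚ V) (gW : ℤ → Submodule ℚ W)
    [DirectSum.Decomposition gV] [DirectSum.Decomposition gW] :
    V ⊗[ℚ] W →ₗ[ℚ] W ⊗[ℚ] V :=
  TensorProduct.lift
    ((DirectSum.toModule ℚ ℤ (W →ₗ[ℚ] W ⊗[ℚ] V) (fun i =>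
        (((DirectSum.toModule ℚ ℤ (V →ₗ[ℚ] W ⊗[ℚ] V) (fun j =>
              ((-1 : ℚ) ^ (i * j)) • ((TensorProduct.mk ℚ W V).comp (gW j).subtype))).comp
            (DirectSum.decomposeLinearEquiv gW).toLinearMap).flip).comp
          (gV i).subtype)).comp
      (DirectSum.decomposeLinearEquiv gV).toLinearMap)

/-- The degree `n` part of the tensor product grading:
the span of the homogeneous tensors of total degree `n`. -/
def tensorGrading {V W : Type} [AddCommGroup V] [Module ℚ V] [AddCommGroup W] [Module ℚ W]
    (gV : ℤ → Submodule ℚ V) (gW : ℤ → Submodule ℚ W) (n : ℤ) : Submodule ℚ (V ⊗[ℚ] W) :=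
  ⨆ p : {p : ℤ × ℤ // p.1 + p.2 = n},
    LinearMap.range (TensorProduct.map (gV p.1.1).subtype (gW p.1.2).subtype)

/-- `f` is a quasi-isomorphism from the complex `(V, dV)` to the complex `(W, dW)`:
it induces a bijection on homology (`ker d / im d`). -/
def IsQuasiIso {V W : Type} [AddCommGroup V] [Module ℚ V] [AddCommGroup W] [Module ℚ W]
    (dV : V →ₗ[ℚ] V) (dW : W →ₗ[ℚ] W) (f : V →ₗ[ℚ] W) : Prop :=
  (∀ x : V, dV x = 0 → (∃ y, f x = dW y) → ∃ z, x = dV z) ∧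
  (∀ w : W, dW w = 0 → ∃ x, dV x = 0 ∧ ∃ y, w - f x = dW y)

/-- A differential graded algebra over `ℚ`. -/
structure DGAlgebra extends DGVect where
  mul : carrier →ₗ[ℚ] carrier →ₗ[ℚ] carrier
  one : carrier
  one_mem : one ∈ grading 0
  mul_mem : ∀ (i j : ℤ) (x y : carrier), x ∈ grading i → y ∈ grading j →
    mul x y ∈ grading (i + j)
  mul_assoc' : ∀ x y z : carrier, mul (mul x y) z = mul x (mul y z)
  one_mul' : ∀ x : carrier, mul one x = x
  mul_one' : ∀ x : carrier, mul x one = x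
  leibniz : ∀ (i : ℤ) (x y : carrier), x ∈ grading i →
    d (mul x y) = mul (d x) y + ((-1 : ℚ) ^ i) • mul x (d y)

/-- The multiplication of a dg algebra as a map out of the tensor product. -/
def DGAlgebra.mulMap (A : DGAlgebra) : A.carrier ⊗[ℚ] A.carrier →ₗ[ℚ] A.carrier :=
  TensorProduct.lift A.mul

/-- A dg algebra is connective if it is concentrated in non-negative degrees. -/
def DGAlgebra.Connective (A : DGAlgebra) : Prop := ∀ n : ℤ, n < 0 → A.grading n = ⊥

/-- A (coassociative counital) differential graded coalgebra over `ℚ`,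
non-negatively graded. -/
structure DGCoalgebra extends DGVect where
  comul : carrier →ₗ[ℚ] carrier ⊗[ℚ] carrier
  counit : carrier →ₗ[ℚ] ℚ
  nonneg : ∀ n : ℤ, n < 0 → grading n = ⊥
  comul_mem : ∀ (n : ℤ), ∀ x ∈ grading n, comul x ∈ tensorGrading grading grading n
  counit_zero : ∀ (n : ℤ), n ≠ 0 → ∀ x ∈ grading n, counit x = 0
  coassoc : (TensorProduct.assoc ℚ carrier carrier carrier).toLinearMap.comp
      ((TensorProduct.map comul LinearMap.id).comp comul)
      = (TensorProduct.map LinearMap.id comul).comp comul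
  counit_comul_left : (TensorProduct.lid ℚ carrier).toLinearMap.comp
      ((TensorProduct.map counit LinearMap.id).comp comul) = LinearMap.id
  counit_comul_right : (TensorProduct.rid ℚ carrier).toLinearMap.comp
      ((TensorProduct.map LinearMap.id counit).comp comul) = LinearMap.id
  comul_chain : comul.comp d
      = (TensorProduct.map d LinearMap.id + TensorProduct.map (parityOf grading) d).comp comul
  counit_chain : counit.comp d = 0

/-- Cocommutativity: the comultiplication is invariant under the Koszul signed twist. -/
def DGCoalgebra.Cocomm (C : DGCoalgebra) : Prop :=
  (kSwapOf C.grading C.grading).comp C.comul = C.comul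

/-- A coaugmented dg coalgebra: a dg coalgebra with a coaugmentation `η : ℚ → C`,
recorded by the grouplike element `one = η 1` in degree `0`. -/
structure CoaugDGCoalgebra extends DGCoalgebra where
  one : carrier
  one_mem : one ∈ grading 0
  counit_one : counit one = 1
  comul_one : comul one = one ⊗ₜ[ℚ] one

/-- A coaugmented dg coalgebra is 2-reduced if `C₀ = ℚ` (spanned by the coaugmentation)
and `C₁ = 0`. -/
def CoaugDGCoalgebra.TwoReduced (C : CoaugDGCoalgebra) : Prop :=
  C.grading 0 = Submodule.span ℚ {C.one} ∧ C.grading 1 = ⊥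

/-- A twisting chain `τ : C ⇝ A`: a degree `-1` linear map satisfying
`d(τc) = -τ(dc) - (-1)^{|c₍₀₎|} τ(c₍₀₎)·τ(c₍₁₎)`. -/
structure TwistingChain (C : DGCoalgebra) (A : DGAlgebra) where
  toFun : C.carrier →ₗ[ℚ] A.carrier
  mem : ∀ (n : ℤ), ∀ x ∈ C.grading n, toFun x ∈ A.grading (n - 1)
  twist : A.d.comp toFun + toFun.comp C.d
      + A.mulMap.comp ((TensorProduct.map (toFun.comp (parityOf C.grading)) toFun).comp C.comul)
      = 0

/-- A left dg module over a dg algebra. -/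
structure DGModule (A : DGAlgebra) extends DGVect where
  smul : A.carrier →ₗ[ℚ] carrier →ₗ[ℚ] carrier
  smul_mem : ∀ (i j : ℤ) (a : A.carrier) (x : carrier), a ∈ A.grading i → x ∈ grading j →
    smul a x ∈ grading (i + j)
  one_smul' : ∀ x : carrier, smul A.one x = x
  mul_smul' : ∀ (a b : A.carrier) (x : carrier), smul (A.mul a b) x = smul a (smul b x)
  leibniz : ∀ (i : ℤ) (a : A.carrier) (x : carrier), a ∈ A.grading i →
    d (smul a x) = smul (A.d a) x + ((-1 : ℚ) ^ i) • smul a (d x)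

/-- The action of a dg module as a map out of the tensor product. -/
def DGModule.actionMap {A : DGAlgebra} (M : DGModule A) :
    A.carrier ⊗[ℚ] M.carrier →ₗ[ℚ] M.carrier := TensorProduct.lift M.smul

/-- A left dg comodule over a dg coalgebra. -/
structure DGComodule (C : DGCoalgebra) extends DGVect where
  coact : carrier →ₗ[ℚ] C.carrier ⊗[ℚ] carrier
  coact_mem : ∀ (n : ℤ), ∀ x ∈ grading n, coact x ∈ tensorGrading C.grading grading n
  coassoc : (TensorProduct.assoc ℚ C.carrier C.carrier carrier).toLinearMap.comp
      ((TensorProduct.map C.comul LinearMap.id).comp coact)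
      = (TensorProduct.map LinearMap.id coact).comp coact
  counit_coact : (TensorProduct.lid ℚ carrier).toLinearMap.comp
      ((TensorProduct.map C.counit LinearMap.id).comp coact) = LinearMap.id
  coact_chain : coact.comp d
      = (TensorProduct.map C.d LinearMap.id + TensorProduct.map (parityOf C.grading) d).comp coact

/-- Morphisms of dg modules: degree `0` graded chain maps commuting with the action. -/
def IsModuleHom (A : DGAlgebra) (M M' : DGModule A)
    (g : M.carrier →ₗ[ℚ] M'.carrier) : Prop :=
  (∀ (n : ℤ), ∀ x ∈ M.grading n, g x ∈ M'.grading n) ∧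
  g.comp M.d = M'.d.comp g ∧
  g.comp M.actionMap = M'.actionMap.comp (TensorProduct.map LinearMap.id g)

/-- Morphisms of dg comodules: degree `0` graded chain maps commuting with the coaction. -/
def IsComoduleHom (C : DGCoalgebra) (N N' : DGComodule C)
    (f : N.carrier →ₗ[ℚ] N'.carrier) : Prop :=
  (∀ (n : ℤ), ∀ x ∈ N.grading n, f x ∈ N'.grading n) ∧
  f.comp N.d = N'.d.comp f ∧
  (TensorProduct.map LinearMap.id f).comp N.coact = N'.coact.comp f

/-- The `A`-action on a twisted extension `A ⊗_τ N`: multiplication on the first factor. -/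
def extAction (A : DGAlgebra) (N : Type) [AddCommGroup N] [Module ℚ N] :
    A.carrier ⊗[ℚ] (A.carrier ⊗[ℚ] N) →ₗ[ℚ] A.carrier ⊗[ℚ] N :=
  (TensorProduct.map A.mulMap LinearMap.id).comp
    (TensorProduct.assoc ℚ A.carrier A.carrier N).symm.toLinearMap

/-- The differential of the twisted extension `A ⊗_τ N`:
`d(a ⊗ n) = da ⊗ n + (-1)^{|a|} a ⊗ dn - (-1)^{|a|} a·τ(n₍₀₎) ⊗ n₍₁₎`
for a `C`-comodule `(N, dN, ρ)`. -/
def extDiff (C : DGCoalgebra) (A : DGAlgebra) (τ : TwistingChain C A)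
    (N : Type) [AddCommGroup N] [Module ℚ N]
    (dN : N →ₗ[ℚ] N) (ρ : N →ₗ[ℚ] C.carrier ⊗[ℚ] N) :
    A.carrier ⊗[ℚ] N →ₗ[ℚ] A.carrier ⊗[ℚ] N :=
  TensorProduct.map A.d LinearMap.id + TensorProduct.map (parityOf A.grading) dN
    - (TensorProduct.map
        (A.mulMap.comp (TensorProduct.map (parityOf A.grading) τ.toFun)) LinearMap.id).comp
        ((TensorProduct.assoc ℚ A.carrier C.carrier N).symm.toLinearMap.comp
          (TensorProduct.map LinearMap.id ρ))

/-- The `C`-coaction on a twisted coextension `C ⊗^τ M`, namely `Δ ⊗ id`. -/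
def coextCoact (C : DGCoalgebra) (M : Type) [AddCommGroup M] [Module ℚ M] :
    C.carrier ⊗[ℚ] M →ₗ[ℚ] C.carrier ⊗[ℚ] (C.carrier ⊗[ℚ] M) :=
  (TensorProduct.assoc ℚ C.carrier C.carrier M).toLinearMap.comp
    (TensorProduct.map C.comul LinearMap.id)

/-- The differential of the twisted coextension `C ⊗^τ M`, expressed in terms of the map
`tact : C ⊗ M → M`, `c ⊗ m ↦ τ(c)·m`:
`d(c ⊗ m) = dc ⊗ m + (-1)^{|c|} c ⊗ dm + (-1)^{|c₍₀₎|} c₍₀₎ ⊗ τ(c₍₁₎)·m`. -/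
def coextDiffFrom (C : DGCoalgebra) (M : Type) [AddCommGroup M] [Module ℚ M]
    (dM : M →ₗ[ℚ] M) (tact : C.carrier ⊗[ℚ] M →ₗ[ℚ] M) :
    C.carrier ⊗[ℚ] M →ₗ[ℚ] C.carrier ⊗[ℚ] M :=
  TensorProduct.map C.d LinearMap.id + TensorProduct.map (parityOf C.grading) dM
    + (TensorProduct.map (parityOf C.grading) tact).comp (coextCoact C M)

/-- The differential of the twisted coextension `C ⊗^τ M` of an `A`-module `(M, dM, act)`. -/
def coextDiff (C : DGCoalgebra) (A : DGAlgebra) (τ : TwistingChain C A)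
    (M : Type) [AddCommGroup M] [Module ℚ M]
    (dM : M →ₗ[ℚ] M) (act : A.carrier ⊗[ℚ] M →ₗ[ℚ] M) :
    C.carrier ⊗[ℚ] M →ₗ[ℚ] C.carrier ⊗[ℚ] M :=
  coextDiffFrom C M dM (act.comp (TensorProduct.map τ.toFun LinearMap.id))

/-- Morphisms of dg algebras. -/
structure DGAlgebraHom (A B : DGAlgebra) where
  toLinearMap : A.carrier →ₗ[ℚ] B.carrier
  mem : ∀ (n : ℤ), ∀ x ∈ A.grading n, toLinearMap x ∈ B.grading n
  chain : toLinearMap.comp A.d = B.d.comp toLinearMap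
  map_one : toLinearMap A.one = B.one
  map_mul : ∀ x y : A.carrier, toLinearMap (A.mul x y) = B.mul (toLinearMap x) (toLinearMap y)

/-- Data exhibiting a dg algebra as the cobar construction `ΩC` of a coaugmented
dg coalgebra `C`, via the universal twisting chain `t : C ⇝ ΩC`:
dg algebra maps `ΩC → A` correspond bijectively to twisting chains `C ⇝ A`
vanishing on the coaugmentation. -/
structure CobarData (C : CoaugDGCoalgebra) where
  alg : DGAlgebra
  t : TwistingChain C.toDGCoalgebra alg
  t_one : t.toFun C.one = 0
  univ : ∀ (A : DGAlgebra) (τ : TwistingChain C.toDGCoalgebra A), τ.toFun C.one = 0 →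
    ∃! F : DGAlgebraHom alg A, F.toLinearMap.comp t.toFun = τ.toFun

/-- A morphism of `C`-comodules is a `t`-equivalence if the induced morphism of twisted
extensions `ΩC ⊗_t N → ΩC ⊗_t M` is a quasi-isomorphism. -/
def IsTEquiv (C : CoaugDGCoalgebra) (Ω : CobarData C) (N M : DGComodule C.toDGCoalgebra)
    (f : N.carrier →ₗ[ℚ] M.carrier) : Prop :=
  IsQuasiIso (extDiff C.toDGCoalgebra Ω.alg Ω.t N.carrier N.d N.coact)
    (extDiff C.toDGCoalgebra Ω.alg Ω.t M.carrier M.d M.coact)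
    (TensorProduct.map LinearMap.id f)

namespace CobarAcyclic

/-- A decomposition from a linear map which is correct on homogeneous elements. -/
@[reducible] def decompOf {V : Type} [AddCommGroup V] [Module ℚ V] (g : ℤ → Submodule ℚ V)
    (dec : V →ₗ[ℚ] DirectSum ℤ fun i => g i)
    (h : ∀ (n : ℤ) (x : g n), dec x = DirectSum.lof ℚ ℤ (fun i => g i) n x)
    (htop : ⨆ n, g n = ⊤) : DirectSum.Decomposition g :=
  DirectSum.Decomposition.ofLinearMap g dec
    (by
      ext x
      have hx : x ∈ ⨆ n, g n := htop ▸ Submodule.mem_top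
      induction hx using Submodule.iSup_induction' with
      | mem i x hx =>
        have := h i ⟨x, hx⟩
        simp only at this
        simp [this]
      | zero => simp
      | add x y _ _ hx hy => rw [map_add, hx, hy, map_add])
    (by
      ext n x : 2
      simp [h])

variable {V W : Type} [AddCommGroup V] [Module ℚ V] [AddCommGroup W] [Module ℚ W]

lemma tmul_mem (gV : ℤ → Submodule ℚ V) (gW : ℤ → Submodule ℚ W) {i j n : ℤ} {x : V} {y : W}
    (hx : x ∈ gV i) (hy : y ∈ gW j) (h : i + j = n) :
    x ⊗ₜ[ℚ] y ∈ tensorGrading gV gW n := by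
  refine Submodule.mem_iSup_of_mem ⟨(i, j), h⟩ ?_
  exact ⟨(⟨x, hx⟩ : gV i) ⊗ₜ[ℚ] (⟨y, hy⟩ : gW j), by simp⟩

lemma tensor_induction (gV : ℤ → Submodule ℚ V) (gW : ℤ → Submodule ℚ W) {n : ℤ}
    {p : V ⊗[ℚ] W → Prop} (zero : p 0) (add : ∀ x y, p x → p y → p (x + y))
    (tmul : ∀ (i j : ℤ) (x : V) (y : W), x ∈ gV i → y ∈ gW j → i + j = n → p (x ⊗ₜ[ℚ] y))
    {z : V ⊗[ℚ] W} (hz : z ∈ tensorGrading gV gW n) : p z := by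
  refine Submodule.iSup_induction _ (motive := p) hz ?_ zero add
  rintro ⟨⟨i, j⟩, hij⟩ _ ⟨w, rfl⟩
  induction w with
  | zero => simpa using zero
  | add x y hx hy => rw [map_add]; exact add _ _ hx hy
  | tmul x y => exact tmul i j x y x.2 y.2 hij

section
variable (gV : ℤ → Submodule ℚ V) (gW : ℤ → Submodule ℚ W)
  [DirectSum.Decomposition gV] [DirectSum.Decomposition gW]

def homPart (i j : ℤ) : gV i →ₗ[ℚ] gW j →ₗ[ℚ] DirectSum ℤ fun n => tensorGrading gV gW n :=
  LinearMap.mk₂ ℚ (fun x y => DirectSum.lof ℚ ℤ (fun n => tensorGrading gV gW n) (i + j)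
      ⟨(x : V) ⊗ₜ[ℚ] (y : W), tmul_mem gV gW x.2 y.2 rfl⟩)
    (fun x x' y => by
      rw [← map_add]; congr 1; ext; simp [TensorProduct.add_tmul])
    (fun c x y => by
      rw [← map_smul]; congr 1)
    (fun x x' y => by
      rw [← map_add]; congr 1; ext; simp [TensorProduct.tmul_add])
    (fun c x y => by
      rw [← map_smul]; congr 1; ext; simp)

def decT : V ⊗[ℚ] W →ₗ[ℚ] DirectSum ℤ fun n => tensorGrading gV gW n :=
  TensorProduct.lift
    ((DirectSum.toModule ℚ ℤ _ (fun i =>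
        (((DirectSum.toModule ℚ ℤ (gV i →ₗ[ℚ] DirectSum ℤ fun n => tensorGrading gV gW n)
          (fun j => (homPart gV gW i j).flip)).comp
            (DirectSum.decomposeLinearEquiv gW).toLinearMap).flip))).comp
      (DirectSum.decomposeLinearEquiv gV).toLinearMap)

lemma decT_tmul {i j n : ℤ} {x : V} {y : W} (hx : x ∈ gV i) (hy : y ∈ gW j) (h : i + j = n) :
    decT gV gW (x ⊗ₜ[ℚ] y) = DirectSum.lof ℚ ℤ (fun n => tensorGrading gV gW n) n
      ⟨x ⊗ₜ[ℚ] y, tmul_mem gV gW hx hy h⟩ := by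
  subst h
  simp only [decT, TensorProduct.lift.tmul, LinearMap.comp_apply, LinearEquiv.coe_coe,
    DirectSum.decomposeLinearEquiv_apply, DirectSum.decompose_of_mem _ hx,
    DirectSum.decompose_of_mem _ hy, ← DirectSum.lof_eq_of ℚ, DirectSum.toModule_lof,
    LinearMap.flip_apply]
  rfl

@[reducible] def tensorDecomp : DirectSum.Decomposition (tensorGrading gV gW) :=
  decompOf _ (decT gV gW)
    (by
      rintro n ⟨z, hz⟩
      have H : ∃ h : z ∈ tensorGrading gV gW n, decT gV gW z
          = DirectSum.lof ℚ ℤ (fun n => tensorGrading gV gW n) n ⟨z, h⟩ := by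
        refine tensor_induction gV gW (p := fun z => ∃ h : z ∈ tensorGrading gV gW n,
          decT gV gW z = DirectSum.lof ℚ ℤ (fun n => tensorGrading gV gW n) n ⟨z, h⟩)
          ?_ ?_ ?_ hz
        · refine ⟨zero_mem _, ?_⟩
          rw [map_zero]; symm; exact map_zero _
        · rintro x y ⟨hx, ex⟩ ⟨hy, ey⟩
          refine ⟨add_mem hx hy, ?_⟩
          rw [map_add, ex, ey, ← map_add]
          rfl
        · intro i j x y hx hy hij
          exact ⟨_, decT_tmul gV gW hx hy hij⟩
      exact H.2)
    (by
      rw [eq_top_iff]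
      rintro z -
      induction z with
      | zero => exact zero_mem _
      | add x y hx hy => exact add_mem hx hy
      | tmul x y =>
        induction x using DirectSum.Decomposition.inductionOn gV with
        | zero => simp
        | add x x' hx hx' => rw [TensorProduct.add_tmul]; exact add_mem hx hx'
        | @homogeneous i x =>
          induction y using DirectSum.Decomposition.inductionOn gW with
          | zero => simp
          | add x x' hx hx' => rw [TensorProduct.tmul_add]; exact add_mem hx hx'
          | @homogeneous j y =>
            exact Submodule.mem_iSup_of_mem (i + j) (tmul_mem gV gW x.2 y.2 rfl))
end

section
variable (gV : ℤ → Submodule ℚ V) (gW : ℤ → Submodule ℚ W)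
  [DirectSum.Decomposition gV] [DirectSum.Decomposition gW]

/-- The grading on the square-zero extension: second summand shifted by one. -/
def prodGrading (n : ℤ) : Submodule ℚ (V × W) := (gV n).prod (gW (n + 1))

def inlPart (n : ℤ) : gV n →ₗ[ℚ] prodGrading gV gW n :=
  LinearMap.codRestrict _ ((LinearMap.inl ℚ V W).comp (gV n).subtype)
    (fun x => ⟨x.2, zero_mem _⟩)

def inrPart (n : ℤ) : gW n →ₗ[ℚ] prodGrading gV gW (n - 1) :=
  LinearMap.codRestrict _ ((LinearMap.inr ℚ V W).comp (gW n).subtype)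
    (fun x => ⟨zero_mem _, by simp⟩)

def decP : V × W →ₗ[ℚ] DirectSum ℤ fun n => prodGrading gV gW n :=
  LinearMap.coprod
    ((DirectSum.toModule ℚ ℤ _ fun n =>
        (DirectSum.lof ℚ ℤ (fun n => prodGrading gV gW n) n).comp (inlPart gV gW n)).comp
      (DirectSum.decomposeLinearEquiv gV).toLinearMap)
    ((DirectSum.toModule ℚ ℤ _ fun n =>
        (DirectSum.lof ℚ ℤ (fun n => prodGrading gV gW n) (n - 1)).comp (inrPart gV gW n)).comp
      (DirectSum.decomposeLinearEquiv gW).toLinearMap)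

lemma lof_congr (g : ℤ → Submodule ℚ V) {i j : ℤ} (h : i = j) (x : g i) (y : g j)
    (hxy : (x : V) = y) :
    DirectSum.lof ℚ ℤ (fun n => g n) i x = DirectSum.lof ℚ ℤ (fun n => g n) j y := by
  subst h
  congr 1
  exact Subtype.ext hxy

@[reducible] def prodDecomp : DirectSum.Decomposition (prodGrading gV gW) :=
  decompOf _ (decP gV gW)
    (by
      rintro n ⟨⟨v, w⟩, hv, hw⟩
      simp only at hv hw
      simp only [decP, LinearMap.coprod_apply, LinearMap.comp_apply, LinearEquiv.coe_coe,
        DirectSum.decomposeLinearEquiv_apply, DirectSum.decompose_of_mem _ hv,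
        DirectSum.decompose_of_mem _ hw, ← DirectSum.lof_eq_of ℚ, DirectSum.toModule_lof]
      rw [lof_congr (prodGrading gV gW) (show n + 1 - 1 = n by ring)
        (inrPart gV gW (n + 1) ⟨w, hw⟩) ⟨(0, w), ⟨zero_mem _, hw⟩⟩ rfl, ← map_add]
      congr 1
      apply Subtype.ext
      change ((v, 0) : V × W) + (0, w) = (v, w)
      simp)
    (by
      rw [eq_top_iff]
      rintro ⟨v, w⟩ -
      have h1 : ((v, 0) : V × W) ∈ ⨆ n, prodGrading gV gW n := by
        induction v using DirectSum.Decomposition.inductionOn gV with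
        | zero => exact zero_mem _
        | add x x' hx hx' => simpa using add_mem hx hx'
        | @homogeneous i x => exact Submodule.mem_iSup_of_mem i ⟨x.2, zero_mem _⟩
      have h2 : ((0, w) : V × W) ∈ ⨆ n, prodGrading gV gW n := by
        induction w using DirectSum.Decomposition.inductionOn gW with
        | zero => exact zero_mem _
        | add x x' hx hx' => simpa using add_mem hx hx'
        | @homogeneous i x =>
          exact Submodule.mem_iSup_of_mem (i - 1) ⟨zero_mem _, by simp⟩
      simpa using add_mem h1 h2)

end

section
variable (g : ℤ → Submodule ℚ V) [DirectSum.Decomposition g]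

lemma parity_mem {n : ℤ} {x : V} (hx : x ∈ g n) : parityOf g x = ((-1 : ℚ) ^ n) • x := by
  simp only [parityOf, signOpOf, LinearMap.comp_apply, LinearEquiv.coe_coe,
    DirectSum.decomposeLinearEquiv_apply, DirectSum.decompose_of_mem _ hx,
    ← DirectSum.lof_eq_of ℚ, DirectSum.toModule_lof]
  simp

lemma sign_sq (n : ℤ) : ((-1 : ℚ) ^ n) * (-1 : ℚ) ^ n = 1 := by
  rw [← mul_zpow]; simp

lemma parity_parity (x : V) : parityOf g (parityOf g x) = x := by
  induction x using DirectSum.Decomposition.inductionOn g with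
  | zero => simp
  | add x y hx hy => rw [map_add, map_add, hx, hy]
  | @homogeneous n x =>
    rw [parity_mem g x.2, map_smul, parity_mem g x.2, smul_smul, sign_sq, one_smul]

end

/-- The ground field as a dg algebra. -/
def ratGrading (n : ℤ) : Submodule ℚ ℚ := if n = 0 then ⊤ else ⊥

lemma ratGrading_ne {n : ℤ} (h : n ≠ 0) : ratGrading n = ⊥ := if_neg h

lemma mem_rat_zero (x : ℚ) : x ∈ ratGrading 0 := by simp [ratGrading]

@[reducible] def ratDecomp : DirectSum.Decomposition ratGrading :=
  decompOf _ ((DirectSum.lof ℚ ℤ (fun n => ratGrading n) 0).comp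
      (LinearMap.codRestrict _ LinearMap.id mem_rat_zero))
    (by
      rintro n ⟨x, hx⟩
      by_cases h : n = 0
      · subst h; rfl
      · have : x = 0 := by simpa [ratGrading_ne h] using hx
        subst this
        rw [map_zero]; symm; exact map_zero _)
    (by
      rw [eq_top_iff]
      rintro x -
      exact Submodule.mem_iSup_of_mem 0 (mem_rat_zero x))

def ratAlg : DGAlgebra where
  carrier := ℚ
  grading := ratGrading
  isDecomp := ratDecomp
  d := 0
  d_mem := by intros; simp
  d_sq := by simp
  mul := LinearMap.mul ℚ ℚ
  one := 1
  one_mem := mem_rat_zero 1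
  mul_mem := by
    intro i j x y hx hy
    by_cases hi : i = 0
    · by_cases hj : j = 0
      · subst hi hj; exact mem_rat_zero _
      · have : y = 0 := by simpa [ratGrading_ne hj] using hy
        subst this; simp
    · have : x = 0 := by simpa [ratGrading_ne hi] using hx
      subst this; simp
  mul_assoc' := by intros; simp [mul_assoc]
  one_mul' := by intros; simp
  mul_one' := by intros; simp
  leibniz := by intros; simp

section main
variable (C : CoaugDGCoalgebra) (Ω : CobarData C)

lemma one_d : C.d C.one = 0 := by
  have h := C.d_mem 0 _ C.one_mem
  rw [C.nonneg _ (by norm_num)] at h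
  simpa using h

lemma parity_one : (parityOf C.grading) C.one = C.one := by
  rw [parity_mem _ C.one_mem]; simp

lemma parity_d (x : C.carrier) : (parityOf C.grading) (C.d x) = - C.d ((parityOf C.grading) x) := by
  induction x using DirectSum.Decomposition.inductionOn C.grading with
  | zero => simp
  | add x y hx hy => simp only [map_add, hx, hy, neg_add]
  | @homogeneous n x =>
    rw [parity_mem _ x.2, parity_mem _ (C.d_mem n _ x.2), map_smul,
      zpow_sub_one₀ (by norm_num)]
    simp

lemma counit_parity (x : C.carrier) : C.counit ((parityOf C.grading) x) = C.counit x := by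
  induction x using DirectSum.Decomposition.inductionOn C.grading with
  | zero => simp
  | add x y hx hy => simp only [map_add, hx, hy]
  | @homogeneous n x =>
    rw [parity_mem _ x.2, map_smul]
    by_cases h : n = 0
    · subst h; simp
    · simp [C.counit_zero n h _ x.2]

lemma counit_d (x : C.carrier) : C.counit (C.d x) = 0 :=
  LinearMap.congr_fun C.counit_chain x

lemma comul_parity (x : C.carrier) :
    C.comul ((parityOf C.grading) x) = TensorProduct.map (parityOf C.grading) (parityOf C.grading) (C.comul x) := by
  induction x using DirectSum.Decomposition.inductionOn C.grading with
  | zero => simp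
  | add x y hx hy => simp only [map_add, hx, hy]
  | @homogeneous n x =>
    rw [parity_mem _ x.2, map_smul]
    refine tensor_induction C.grading C.grading
      (p := fun z => ((-1 : ℚ) ^ n) • z = TensorProduct.map (parityOf C.grading) (parityOf C.grading) z) ?_ ?_ ?_
      (C.comul_mem n _ x.2)
    · simp
    · intro x y hx hy; rw [smul_add, hx, hy, map_add]
    · intro i j x y hx hy hij
      rw [TensorProduct.map_tmul, parity_mem _ hx, parity_mem _ hy, TensorProduct.smul_tmul_smul,
        ← hij, zpow_add₀ (by norm_num)]

lemma alg_d_one (A : DGAlgebra) : A.d A.one = 0 := by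
  have h := A.leibniz 0 A.one A.one A.one_mem
  rw [A.one_mul', A.one_mul', A.mul_one'] at h
  simpa using h

/-- Right multiplication on `C ⊗ ΩC`. -/
def rM : Ω.alg.carrier →ₗ[ℚ]
    (C.carrier ⊗[ℚ] Ω.alg.carrier) →ₗ[ℚ] (C.carrier ⊗[ℚ] Ω.alg.carrier) :=
  (LinearMap.lTensorHom C.carrier).comp Ω.alg.mul.flip

@[simp] lemma rM_tmul (b : Ω.alg.carrier) (c : C.carrier) (a : Ω.alg.carrier) :
    rM C Ω b (c ⊗ₜ[ℚ] a) = c ⊗ₜ[ℚ] Ω.alg.mul a b := rfl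

lemma rM_one (x : C.carrier ⊗[ℚ] Ω.alg.carrier) : rM C Ω Ω.alg.one x = x := by
  induction x with
  | zero => simp
  | add x y hx hy => rw [map_add, hx, hy]
  | tmul c a => rw [rM_tmul, Ω.alg.mul_one']

lemma rM_mul (a b : Ω.alg.carrier) (x : C.carrier ⊗[ℚ] Ω.alg.carrier) :
    rM C Ω (Ω.alg.mul a b) x = rM C Ω b (rM C Ω a x) := by
  induction x with
  | zero => simp
  | add x y hx hy => simp only [map_add, hx, hy]
  | tmul c m => simp only [rM_tmul, Ω.alg.mul_assoc']

/-- The twisted part `c ↦ (-1)^{|c₀|} c₀ ⊗ t c₁`. -/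
def phi : C.carrier →ₗ[ℚ] C.carrier ⊗[ℚ] Ω.alg.carrier :=
  (TensorProduct.map (parityOf C.grading) Ω.t.toFun).comp C.comul

/-- The differential of the twisted coextension. -/
def dM : C.carrier ⊗[ℚ] Ω.alg.carrier →ₗ[ℚ] C.carrier ⊗[ℚ] Ω.alg.carrier :=
  coextDiff C.toDGCoalgebra Ω.alg Ω.t Ω.alg.carrier Ω.alg.d Ω.alg.mulMap

lemma dM_tmul (c : C.carrier) (m : Ω.alg.carrier) :
    dM C Ω (c ⊗ₜ[ℚ] m) = C.d c ⊗ₜ[ℚ] m + (parityOf C.grading) c ⊗ₜ[ℚ] Ω.alg.d m + rM C Ω m (phi C Ω c) := by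
  simp only [dM, coextDiff, coextDiffFrom, LinearMap.add_apply, TensorProduct.map_tmul,
    LinearMap.id_apply, LinearMap.comp_apply, coextCoact, LinearEquiv.coe_coe, phi]
  congr 1
  induction C.comul c with
  | zero => simp
  | add x y hx hy => simp only [TensorProduct.add_tmul, map_add, hx, hy]
  | tmul x y => simp [DGAlgebra.mulMap]

/-- Parity on the total tensor product, only as needed: `c ⊗ a ↦ (parityOf C.grading) c ⊗ (parityOf C.grading) a`. -/
def PM : C.carrier ⊗[ℚ] Ω.alg.carrier →ₗ[ℚ] C.carrier ⊗[ℚ] Ω.alg.carrier :=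
  TensorProduct.map (parityOf C.grading) (parityOf Ω.alg.grading)

lemma alg_leibniz (A : DGAlgebra) (a b : A.carrier) :
    A.d (A.mul a b) = A.mul (A.d a) b + A.mul (parityOf A.grading a) (A.d b) := by
  induction a using DirectSum.Decomposition.inductionOn A.grading with
  | zero => simp
  | add x y hx hy => simp only [map_add, hx, hy, LinearMap.add_apply]; abel
  | @homogeneous n x => rw [A.leibniz n _ _ x.2, parity_mem _ x.2]; simp

lemma dM_rM (x : C.carrier ⊗[ℚ] Ω.alg.carrier) (b : Ω.alg.carrier) :
    dM C Ω (rM C Ω b x) = rM C Ω b (dM C Ω x) + rM C Ω (Ω.alg.d b) (PM C Ω x) := by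
  induction x with
  | zero => simp
  | add x y hx hy => simp only [map_add, hx, hy]; abel
  | tmul c a =>
    simp only [rM_tmul, dM_tmul, map_add, alg_leibniz, TensorProduct.tmul_add, rM_mul, PM,
      TensorProduct.map_tmul]
    abel

lemma t_parity (x : C.carrier) :
    parityOf Ω.alg.grading (Ω.t.toFun x) = - Ω.t.toFun ((parityOf C.grading) x) := by
  induction x using DirectSum.Decomposition.inductionOn C.grading with
  | zero => simp
  | add x y hx hy => simp only [map_add, hx, hy, neg_add]
  | @homogeneous n x =>
    rw [parity_mem _ x.2, parity_mem _ (Ω.t.mem n _ x.2), map_smul,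
      zpow_sub_one₀ (by norm_num)]
    simp

lemma t_twist (x : C.carrier) :
    Ω.alg.mulMap (TensorProduct.map (Ω.t.toFun.comp (parityOf C.grading)) Ω.t.toFun (C.comul x))
      = - (Ω.alg.d (Ω.t.toFun x) + Ω.t.toFun (C.d x)) := by
  have h := LinearMap.congr_fun Ω.t.twist x
  simp only [LinearMap.add_apply, LinearMap.comp_apply, LinearMap.zero_apply] at h
  rw [← add_eq_zero_iff_eq_neg, add_comm]
  exact h

lemma dM_tone (c : C.carrier) :
    dM C Ω (c ⊗ₜ[ℚ] Ω.alg.one) = C.d c ⊗ₜ[ℚ] Ω.alg.one + phi C Ω c := by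
  rw [dM_tmul, rM_one, alg_d_one]; simp

lemma phi_parity (c : C.carrier) :
    phi C Ω ((parityOf C.grading) c) = TensorProduct.map LinearMap.id (Ω.t.toFun.comp (parityOf C.grading)) (C.comul c) := by
  simp only [phi, LinearMap.comp_apply, comul_parity]
  induction C.comul c with
  | zero => simp
  | add x y hx hy => simp only [map_add, hx, hy]
  | tmul x y => simp [parity_parity]

lemma phi_d (c : C.carrier) :
    phi C Ω (C.d c) = TensorProduct.map ((parityOf C.grading) ∘ₗ C.d) Ω.t.toFun (C.comul c)
      + TensorProduct.map LinearMap.id (Ω.t.toFun ∘ₗ C.d) (C.comul c) := by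
  have h := LinearMap.congr_fun C.comul_chain c
  simp only [LinearMap.comp_apply] at h
  simp only [phi, LinearMap.comp_apply, h]
  induction C.comul c with
  | zero => simp
  | add x y hx hy => simp only [map_add, hx, hy]; abel
  | tmul x y => simp [parity_parity]

/-- `c ⊗ y ↦ φ((parityOf C.grading) c) · t y`. -/
lemma phi_phi (c : C.carrier) :
    TensorProduct.lift ((rM C Ω).flip.compl₁₂ (phi C Ω ∘ₗ (parityOf C.grading)) Ω.t.toFun) (C.comul c)
      = - TensorProduct.map LinearMap.id (Ω.alg.d ∘ₗ Ω.t.toFun + Ω.t.toFun ∘ₗ C.d)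
          (C.comul c) := by
  have h := LinearMap.congr_fun C.coassoc c
  simp only [LinearMap.comp_apply, LinearEquiv.coe_coe] at h
  let G : C.carrier ⊗[ℚ] (C.carrier ⊗[ℚ] C.carrier) →ₗ[ℚ] C.carrier ⊗[ℚ] Ω.alg.carrier :=
    TensorProduct.map LinearMap.id
      (Ω.alg.mulMap ∘ₗ TensorProduct.map (Ω.t.toFun.comp (parityOf C.grading)) Ω.t.toFun)
  have h' := congrArg G h
  have h1 : ∀ z : C.carrier ⊗[ℚ] C.carrier,
      G (TensorProduct.assoc ℚ C.carrier C.carrier C.carrier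
        (TensorProduct.map C.comul LinearMap.id z))
      = TensorProduct.lift ((rM C Ω).flip.compl₁₂ (phi C Ω ∘ₗ (parityOf C.grading)) Ω.t.toFun) z := by
    intro z
    induction z with
    | zero => simp
    | add x y hx hy => simp only [map_add, hx, hy]
    | tmul x y =>
      simp only [TensorProduct.map_tmul, TensorProduct.lift.tmul, LinearMap.compl₁₂_apply,
        LinearMap.comp_apply, LinearMap.flip_apply, phi_parity, LinearMap.id_apply]
      induction C.comul x with
      | zero => simp
      | add u v hu hv => simp only [map_add, hu, hv, TensorProduct.add_tmul]
      | tmul u v => simp [G, DGAlgebra.mulMap]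
  have h2 : ∀ z : C.carrier ⊗[ℚ] C.carrier,
      G (TensorProduct.map LinearMap.id C.comul z)
      = - TensorProduct.map LinearMap.id (Ω.alg.d ∘ₗ Ω.t.toFun + Ω.t.toFun ∘ₗ C.d) z := by
    intro z
    induction z with
    | zero => simp
    | add x y hx hy => simp only [map_add, hx, hy, neg_add]
    | tmul x y =>
      simp only [G, TensorProduct.map_tmul, LinearMap.id_apply, LinearMap.comp_apply,
        LinearMap.add_apply]
      rw [t_twist, TensorProduct.tmul_neg]
  rw [h1, h2] at h'
  exact h'

lemma dM_phi (c : C.carrier) :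
    dM C Ω (phi C Ω c) = TensorProduct.map (C.d ∘ₗ (parityOf C.grading)) Ω.t.toFun (C.comul c)
      + TensorProduct.map LinearMap.id (Ω.alg.d ∘ₗ Ω.t.toFun) (C.comul c)
      + TensorProduct.lift ((rM C Ω).flip.compl₁₂ (phi C Ω ∘ₗ (parityOf C.grading)) Ω.t.toFun) (C.comul c) := by
  conv_lhs => rw [phi, LinearMap.comp_apply]
  induction C.comul c with
  | zero => simp
  | add x y hx hy => simp only [map_add, hx, hy]; abel
  | tmul x y => simp [dM_tmul, parity_parity]

lemma dM_dM_tone (c : C.carrier) : dM C Ω (dM C Ω (c ⊗ₜ[ℚ] Ω.alg.one)) = 0 := by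
  have hdd : C.d (C.d c) = 0 := LinearMap.congr_fun C.d_sq c
  rw [dM_tone, map_add, dM_tone, hdd, phi_d, dM_phi, phi_phi]
  induction C.comul c with
  | zero => simp
  | add x y hx hy =>
    simp only [map_add, TensorProduct.zero_tmul, zero_add] at hx hy ⊢
    rw [← add_zero (0 : C.carrier ⊗[ℚ] Ω.alg.carrier)]
    nth_rw 1 [← hx]
    rw [← hy]
    abel
  | tmul x y =>
    simp [parity_d, TensorProduct.neg_tmul, TensorProduct.tmul_add]
    abel

lemma dM_dM (x : C.carrier ⊗[ℚ] Ω.alg.carrier) : dM C Ω (dM C Ω x) = 0 := by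
  induction x with
  | zero => simp
  | add x y hx hy => simp only [map_add, hx, hy, add_zero]
  | tmul c a =>
    have hdd : Ω.alg.d (Ω.alg.d a) = 0 := LinearMap.congr_fun Ω.alg.d_sq a
    have h : c ⊗ₜ[ℚ] a = rM C Ω a (c ⊗ₜ[ℚ] Ω.alg.one) := by rw [rM_tmul, Ω.alg.one_mul']
    have h1 : PM C Ω (c ⊗ₜ[ℚ] Ω.alg.one) = (parityOf C.grading) c ⊗ₜ[ℚ] Ω.alg.one := by
      simp [PM, parity_mem _ Ω.alg.one_mem]
    have h2 : PM C Ω (dM C Ω (c ⊗ₜ[ℚ] Ω.alg.one)) = - dM C Ω ((parityOf C.grading) c ⊗ₜ[ℚ] Ω.alg.one) := by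
      rw [dM_tone, dM_tone, map_add, neg_add]
      congr 1
      · simp [PM, parity_mem _ Ω.alg.one_mem, parity_d, TensorProduct.neg_tmul]
      · rw [phi_parity, phi, LinearMap.comp_apply]
        induction C.comul c with
        | zero => simp
        | add x y hx hy => simp only [map_add, hx, hy, neg_add]
        | tmul x y => simp [PM, parity_parity, t_parity, TensorProduct.tmul_neg]
    rw [h, dM_rM, map_add, dM_rM, dM_rM, dM_dM_tone, hdd, h1, h2]
    simp

/-- The grading on `C ⊗ ΩC`. -/
abbrev gM (n : ℤ) : Submodule ℚ (C.carrier ⊗[ℚ] Ω.alg.carrier) :=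
  tensorGrading C.grading Ω.alg.grading n

lemma rM_mem {i j n : ℤ} {x : C.carrier ⊗[ℚ] Ω.alg.carrier} {b : Ω.alg.carrier}
    (hx : x ∈ gM C Ω i) (hb : b ∈ Ω.alg.grading j) (h : i + j = n) :
    rM C Ω b x ∈ gM C Ω n := by
  refine tensor_induction C.grading Ω.alg.grading (p := fun z => rM C Ω b z ∈ gM C Ω n)
    ?_ ?_ ?_ hx
  · simp
  · intro x y hx hy; rw [map_add]; exact add_mem hx hy
  · intro k l x y hx hy hkl
    exact tmul_mem _ _ hx (Ω.alg.mul_mem l j _ _ hy hb) (by omega)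

lemma phi_mem {n : ℤ} {c : C.carrier} (hc : c ∈ C.grading n) :
    phi C Ω c ∈ gM C Ω (n - 1) := by
  refine tensor_induction C.grading C.grading
    (p := fun z => TensorProduct.map (parityOf C.grading) Ω.t.toFun z ∈ gM C Ω (n - 1))
    ?_ ?_ ?_ (C.comul_mem n _ hc)
  · simp
  · intro x y hx hy; rw [map_add]; exact add_mem hx hy
  · intro k l x y hx hy hkl
    rw [TensorProduct.map_tmul, parity_mem _ hx]
    exact tmul_mem _ _ (Submodule.smul_mem _ _ hx) (Ω.t.mem l _ hy) (by omega)

lemma dM_mem {n : ℤ} {x : C.carrier ⊗[ℚ] Ω.alg.carrier} (hx : x ∈ gM C Ω n) :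
    dM C Ω x ∈ gM C Ω (n - 1) := by
  refine tensor_induction C.grading Ω.alg.grading (p := fun z => dM C Ω z ∈ gM C Ω (n - 1))
    ?_ ?_ ?_ hx
  · simp
  · intro x y hx hy; rw [map_add]; exact add_mem hx hy
  · intro k l x y hx hy hkl
    rw [dM_tmul, parity_mem _ hx]
    refine add_mem (add_mem ?_ ?_) ?_
    · exact tmul_mem _ _ (C.d_mem k _ hx) hy (by omega)
    · exact tmul_mem _ _ (Submodule.smul_mem _ _ hx) (Ω.alg.d_mem l _ hy) (by omega)
    · exact rM_mem C Ω (phi_mem C Ω hx) hy (by omega)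

lemma PM_mem {n : ℤ} {x : C.carrier ⊗[ℚ] Ω.alg.carrier} (hx : x ∈ gM C Ω n) :
    PM C Ω x = ((-1 : ℚ) ^ n) • x := by
  refine tensor_induction C.grading Ω.alg.grading
    (p := fun z => PM C Ω z = ((-1 : ℚ) ^ n) • z) ?_ ?_ ?_ hx
  · simp
  · intro x y hx hy; rw [map_add, hx, hy, smul_add]
  · intro i j x y hx hy hij
    rw [PM, TensorProduct.map_tmul, parity_mem _ hx, parity_mem _ hy,
      TensorProduct.smul_tmul_smul, ← hij, zpow_add₀ (by norm_num)]

/-- The augmentation exists. -/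
lemma exists_aug : ∃ e : Ω.alg.carrier →ₗ[ℚ] ℚ, e Ω.alg.one = 1 ∧
    (∀ a b, e (Ω.alg.mul a b) = e a * e b) ∧ (∀ a, e (Ω.alg.d a) = 0) ∧
    (∀ c, e (Ω.t.toFun c) = 0) ∧ (∀ n : ℤ, n ≠ 0 → ∀ a ∈ Ω.alg.grading n, e a = 0) := by
  let τ : TwistingChain C.toDGCoalgebra ratAlg :=
    { toFun := 0
      mem := by intro n x _; exact zero_mem _
      twist := by simp }
  obtain ⟨F, hF, -⟩ := Ω.univ ratAlg τ rfl
  refine ⟨F.toLinearMap, F.map_one, F.map_mul, ?_, ?_, ?_⟩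
  · intro a; exact LinearMap.congr_fun F.chain a
  · intro c; exact LinearMap.congr_fun hF c
  · intro n hn a ha
    have h := F.mem n a ha
    have h' : F.toLinearMap a ∈ ratGrading n := h
    rw [ratGrading_ne hn] at h'
    exact h'

section ext
variable (e : Ω.alg.carrier →ₗ[ℚ] ℚ) (e_one : e Ω.alg.one = 1)
    (e_mul : ∀ a b, e (Ω.alg.mul a b) = e a * e b) (e_d : ∀ a, e (Ω.alg.d a) = 0)
    (e_t : ∀ c, e (Ω.t.toFun c) = 0)
    (e_mem : ∀ n : ℤ, n ≠ 0 → ∀ a ∈ Ω.alg.grading n, e a = 0)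

/-- The inner derivation `a ↦ 1 ⊗ a - e(a) 1 ⊗ 1`. -/
def inn : Ω.alg.carrier →ₗ[ℚ] C.carrier ⊗[ℚ] Ω.alg.carrier :=
  TensorProduct.mk ℚ _ _ C.one - e.smulRight (C.one ⊗ₜ[ℚ] Ω.alg.one)

lemma inn_apply (a : Ω.alg.carrier) :
    inn C Ω e a = C.one ⊗ₜ[ℚ] a - e a • (C.one ⊗ₜ[ℚ] Ω.alg.one) := rfl

lemma phi_one : phi C Ω C.one = 0 := by
  simp [phi, C.comul_one, Ω.t_one]

lemma dM_one_tmul (a : Ω.alg.carrier) :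
    dM C Ω (C.one ⊗ₜ[ℚ] a) = C.one ⊗ₜ[ℚ] Ω.alg.d a := by
  rw [dM_tmul, one_d, phi_one, parity_one]; simp

lemma dM_inn (e_d : ∀ a, e (Ω.alg.d a) = 0) (a : Ω.alg.carrier) : dM C Ω (inn C Ω e a) = inn C Ω e (Ω.alg.d a) := by
  simp only [inn_apply, map_sub, map_smul, dM_one_tmul, alg_d_one, e_d]
  simp

lemma inn_mul (e_mul : ∀ a b, e (Ω.alg.mul a b) = e a * e b) (a b : Ω.alg.carrier) :
    inn C Ω e (Ω.alg.mul a b) = e a • inn C Ω e b + rM C Ω b (inn C Ω e a) := by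
  simp only [inn_apply, map_sub, map_smul, rM_tmul, e_mul, Ω.alg.one_mul', smul_sub, smul_smul]
  abel

lemma inn_mem (e_mem : ∀ n : ℤ, n ≠ 0 → ∀ a ∈ Ω.alg.grading n, e a = 0)
    (n : ℤ) (a : Ω.alg.carrier) (ha : a ∈ Ω.alg.grading n) :
    inn C Ω e a ∈ gM C Ω n := by
  rw [inn_apply]
  refine sub_mem (tmul_mem _ _ C.one_mem ha (by omega)) ?_
  by_cases h : n = 0
  · subst h
    exact Submodule.smul_mem _ _ (tmul_mem _ _ C.one_mem Ω.alg.one_mem (by omega))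
  · rw [e_mem n h a ha]; simp

/-- Multiplication of the square-zero extension. -/
def extMul : (Ω.alg.carrier × (C.carrier ⊗[ℚ] Ω.alg.carrier)) →ₗ[ℚ]
    (Ω.alg.carrier × (C.carrier ⊗[ℚ] Ω.alg.carrier)) →ₗ[ℚ]
    (Ω.alg.carrier × (C.carrier ⊗[ℚ] Ω.alg.carrier)) :=
  LinearMap.mk₂ ℚ (fun x y => (Ω.alg.mul x.1 y.1, e x.1 • y.2 + rM C Ω y.1 x.2))
    (by
      intro x x' y
      ext1 <;> simp only [Prod.fst_add, Prod.snd_add, map_add, LinearMap.add_apply, add_smul]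
      abel)
    (by
      intro c x y
      ext1 <;> simp only [Prod.smul_fst, Prod.smul_snd, map_smul, LinearMap.smul_apply,
        smul_add, smul_assoc])
    (by
      intro x y y'
      ext1 <;> simp only [Prod.fst_add, Prod.snd_add, map_add, LinearMap.add_apply, smul_add]
      abel)
    (by
      intro c x y
      ext1 <;> simp only [Prod.smul_fst, Prod.smul_snd, map_smul, LinearMap.smul_apply,
        smul_add, smul_comm c (e x.1)])

lemma extMul_apply (x y : Ω.alg.carrier × (C.carrier ⊗[ℚ] Ω.alg.carrier)) :
    extMul C Ω e x y = (Ω.alg.mul x.1 y.1, e x.1 • y.2 + rM C Ω y.1 x.2) := rfl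

/-- Differential of the square-zero extension. -/
def extD : (Ω.alg.carrier × (C.carrier ⊗[ℚ] Ω.alg.carrier)) →ₗ[ℚ]
    (Ω.alg.carrier × (C.carrier ⊗[ℚ] Ω.alg.carrier)) :=
  LinearMap.prod (Ω.alg.d.comp (LinearMap.fst ℚ _ _))
    ((inn C Ω e).comp (LinearMap.fst ℚ _ _) - (dM C Ω).comp (LinearMap.snd ℚ _ _))

lemma extD_apply (x : Ω.alg.carrier × (C.carrier ⊗[ℚ] Ω.alg.carrier)) :
    extD C Ω e x = (Ω.alg.d x.1, inn C Ω e x.1 - dM C Ω x.2) := rfl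

lemma e_sign (e_mem : ∀ n : ℤ, n ≠ 0 → ∀ a ∈ Ω.alg.grading n, e a = 0)
    (n : ℤ) (a : Ω.alg.carrier) (ha : a ∈ Ω.alg.grading n) :
    ((-1 : ℚ) ^ n) * e a = e a := by
  by_cases h : n = 0
  · subst h; simp
  · rw [e_mem n h a ha]; simp

/-- The square-zero extension as a dg algebra. -/
def extAlg : DGAlgebra :=
  letI := tensorDecomp C.grading Ω.alg.grading
  { carrier := Ω.alg.carrier × (C.carrier ⊗[ℚ] Ω.alg.carrier)
    grading := prodGrading Ω.alg.grading (gM C Ω)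
    isDecomp := prodDecomp Ω.alg.grading (gM C Ω)
    d := extD C Ω e
    d_mem := by
      rintro n ⟨a, m⟩ ⟨ha, hm⟩
      refine ⟨Ω.alg.d_mem n _ ha, ?_⟩
      rw [sub_add_cancel]
      refine sub_mem (inn_mem C Ω e e_mem n _ ha) ?_
      have := dM_mem C Ω hm
      rwa [add_sub_cancel_right] at this
    d_sq := by
      apply LinearMap.ext
      rintro ⟨a, m⟩
      have hdd : Ω.alg.d (Ω.alg.d a) = 0 := LinearMap.congr_fun Ω.alg.d_sq a
      simp only [LinearMap.comp_apply, extD_apply, map_sub, dM_inn C Ω e e_d, dM_dM, hdd]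
      simp
    mul := extMul C Ω e
    one := (Ω.alg.one, 0)
    one_mem := ⟨Ω.alg.one_mem, zero_mem _⟩
    mul_mem := by
      rintro i j ⟨a, m⟩ ⟨b, n⟩ ⟨ha, hm⟩ ⟨hb, hn⟩
      refine ⟨Ω.alg.mul_mem i j _ _ ha hb, add_mem ?_ ?_⟩
      · by_cases h : i = 0
        · subst h
          rw [zero_add]
          exact Submodule.smul_mem _ _ hn
        · simp only at ha
          simp [e_mem i h a ha]
      · exact rM_mem C Ω hm hb (by ring)
    mul_assoc' := by
      rintro ⟨a, m⟩ ⟨b, n⟩ ⟨c, p⟩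
      simp only [extMul_apply, Ω.alg.mul_assoc', e_mul, rM_mul, map_add, map_smul, smul_add,
        smul_smul, add_assoc]
    one_mul' := by
      rintro ⟨a, m⟩
      simp [extMul_apply, Ω.alg.one_mul', e_one]
    mul_one' := by
      rintro ⟨a, m⟩
      simp [extMul_apply, Ω.alg.mul_one', rM_one]
    leibniz := by
      rintro i ⟨a, m⟩ ⟨b, n⟩ ⟨ha, hm⟩
      have hs := e_sign C Ω e e_mem i a ha
      simp only [extMul_apply, extD_apply, Ω.alg.leibniz i _ _ ha, inn_mul C Ω e e_mul, map_add,
        map_sub, map_smul, dM_rM, PM_mem C Ω hm, e_d, zero_smul, zero_add, smul_sub, smul_add,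
        Prod.smul_mk, Prod.mk_add_mk, smul_smul, hs]
      congr 1
      rw [zpow_add₀ (by norm_num)]
      simp
      abel }

/-- The twisting chain into the square-zero extension. -/
def extT : TwistingChain C.toDGCoalgebra (extAlg C Ω e e_one e_mul e_d e_mem) where
  toFun := LinearMap.prod Ω.t.toFun
    ((TensorProduct.mk ℚ C.carrier Ω.alg.carrier).flip Ω.alg.one
      - C.counit.smulRight (C.one ⊗ₜ[ℚ] Ω.alg.one))
  mem := by
    intro n x hx
    refine ⟨Ω.t.mem n _ hx, ?_⟩
    rw [sub_add_cancel]
    refine sub_mem (tmul_mem _ _ hx Ω.alg.one_mem (by omega)) ?_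
    by_cases h : n = 0
    · subst h
      exact Submodule.smul_mem _ _ (tmul_mem _ _ C.one_mem Ω.alg.one_mem (by omega))
    · simp [C.counit_zero n h x hx]
  twist := by
    apply LinearMap.ext
    intro c
    let q : C.carrier →ₗ[ℚ] C.carrier ⊗[ℚ] Ω.alg.carrier :=
      (TensorProduct.mk ℚ C.carrier Ω.alg.carrier).flip Ω.alg.one
        - C.counit.smulRight (C.one ⊗ₜ[ℚ] Ω.alg.one)
    have hq : ∀ c, q c = c ⊗ₜ[ℚ] Ω.alg.one - C.counit c • (C.one ⊗ₜ[ℚ] Ω.alg.one) :=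
      fun c => rfl
    have hl := LinearMap.congr_fun C.counit_comul_left c
    simp only [LinearMap.comp_apply, LinearEquiv.coe_coe, LinearMap.id_apply] at hl
    have key : ∀ z : C.carrier ⊗[ℚ] C.carrier,
        TensorProduct.lift (extMul C Ω e)
          (TensorProduct.map ((LinearMap.prod Ω.t.toFun q).comp (parityOf C.grading))
            (LinearMap.prod Ω.t.toFun q) z)
        = (Ω.alg.mulMap (TensorProduct.map (Ω.t.toFun.comp (parityOf C.grading)) Ω.t.toFun z),
            TensorProduct.map (parityOf C.grading) Ω.t.toFun z
              - C.one ⊗ₜ[ℚ] Ω.t.toFun (TensorProduct.lid ℚ C.carrier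
                  (TensorProduct.map C.counit LinearMap.id z))) := by
      intro z
      induction z with
      | zero => simp only [map_zero, TensorProduct.tmul_zero, sub_zero, Prod.mk_zero_zero]
      | add x y hx hy =>
        simp only [map_add, hx, hy, Prod.mk_add_mk, TensorProduct.tmul_add]
        congr 1
        abel
      | tmul x y =>
        simp only [TensorProduct.map_tmul, TensorProduct.lift.tmul, LinearMap.comp_apply,
          LinearMap.prod_apply, Function.prod_apply, extMul_apply, e_t, zero_smul, zero_add, hq, map_sub,
          map_smul, rM_tmul, Ω.alg.one_mul', counit_parity, DGAlgebra.mulMap,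
          TensorProduct.lid_tmul, LinearMap.id_apply, TensorProduct.tmul_smul]
    change extD C Ω e (Ω.t.toFun c, q c) + (Ω.t.toFun (C.d c), q (C.d c))
      + TensorProduct.lift (extMul C Ω e)
          (TensorProduct.map ((LinearMap.prod Ω.t.toFun q).comp (parityOf C.grading))
            (LinearMap.prod Ω.t.toFun q) (C.comul c)) = 0
    rw [key, hl, t_twist, extD_apply]
    have h2 : TensorProduct.map (parityOf C.grading) Ω.t.toFun (C.comul c) = phi C Ω c := rfl
    rw [h2, hq, hq]
    simp only [map_sub, map_smul, dM_tone, dM_one_tmul, one_d, phi_one, counit_d, inn_apply, e_t]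
    simp
    abel

/-- The contraction `σ : ΩC → C ⊗ ΩC`. -/
lemma exists_sigma (e_one : e Ω.alg.one = 1)
    (e_mul : ∀ a b, e (Ω.alg.mul a b) = e a * e b) (e_d : ∀ a, e (Ω.alg.d a) = 0)
    (e_t : ∀ c, e (Ω.t.toFun c) = 0)
    (e_mem : ∀ n : ℤ, n ≠ 0 → ∀ a ∈ Ω.alg.grading n, e a = 0) : ∃ σ : Ω.alg.carrier →ₗ[ℚ] C.carrier ⊗[ℚ] Ω.alg.carrier,
    (∀ a, σ (Ω.alg.d a) = inn C Ω e a - dM C Ω (σ a)) ∧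
    (∀ c a, σ (Ω.alg.mul (Ω.t.toFun c) a)
      = c ⊗ₜ[ℚ] a - C.counit c • (C.one ⊗ₜ[ℚ] a)) := by
  obtain ⟨F, hF, -⟩ := Ω.univ (extAlg C Ω e e_one e_mul e_d e_mem)
    (extT C Ω e e_one e_mul e_d e_t e_mem) (by
      change (Ω.t.toFun C.one, C.one ⊗ₜ[ℚ] Ω.alg.one - C.counit C.one • (C.one ⊗ₜ[ℚ] Ω.alg.one))
        = 0
      rw [Ω.t_one, C.counit_one]; simp)
  let f : Ω.alg.carrier →ₗ[ℚ] Ω.alg.carrier × (C.carrier ⊗[ℚ] Ω.alg.carrier) := F.toLinearMap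
  have f_d : ∀ a, f (Ω.alg.d a) = extD C Ω e (f a) := LinearMap.congr_fun F.chain
  have f_mul : ∀ a b, f (Ω.alg.mul a b) = extMul C Ω e (f a) (f b) := F.map_mul
  have f_t : ∀ c, f (Ω.t.toFun c)
      = (Ω.t.toFun c, c ⊗ₜ[ℚ] Ω.alg.one - C.counit c • (C.one ⊗ₜ[ℚ] Ω.alg.one)) :=
    LinearMap.congr_fun hF
  have f_one : f Ω.alg.one = (Ω.alg.one, 0) := F.map_one
  have f_mem : ∀ n, ∀ a ∈ Ω.alg.grading n, (f a).1 ∈ Ω.alg.grading n :=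
    fun n a ha => (F.mem n a ha).1
  -- the first component is the identity, by uniqueness
  have f_fst : ∀ a, (f a).1 = a := by
    let G : DGAlgebraHom Ω.alg Ω.alg :=
      { toLinearMap := (LinearMap.fst ℚ _ _).comp f
        mem := f_mem
        chain := by
          ext a
          simp [f_d, extD_apply]
        map_one := by simp [f_one]
        map_mul := by
          intro x y
          simp [f_mul, extMul_apply] }
    let I : DGAlgebraHom Ω.alg Ω.alg :=
      { toLinearMap := LinearMap.id
        mem := fun _ _ h => h
        chain := rfl
        map_one := rfl
        map_mul := fun _ _ => rfl }
    have hGI : G = I := (Ω.univ Ω.alg Ω.t Ω.t_one).unique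
      (by ext c; simp [G, f_t]) rfl
    intro a
    have := congrArg (fun H : DGAlgebraHom Ω.alg Ω.alg => H.toLinearMap a) hGI
    exact this
  refine ⟨(LinearMap.snd ℚ _ _).comp f, ?_, ?_⟩
  · intro a
    simp only [LinearMap.comp_apply, LinearMap.snd_apply, f_d, extD_apply, f_fst]
  · intro c a
    simp only [LinearMap.comp_apply, LinearMap.snd_apply, f_mul, extMul_apply, f_fst, f_t, e_t,
      zero_smul, zero_add, map_sub, map_smul, rM_tmul, Ω.alg.one_mul']

end ext

end main

end CobarAcyclic

/-! ## Statement 4: acyclicity of the twisted coextension `C ⊗^t ΩC` -/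

/-- For a 2-reduced dg coalgebra `C` with universal twisting chain
`t : C ⇝ ΩC`, regarding `ΩC` as a module over itself, the twisted coextension
`C ⊗^t ΩC` is acyclic: the map `ℚ → C ⊗^t ΩC`, `1 ↦ 1 ⊗ 1` is a quasi-isomorphism of
chain complexes from `ℚ` concentrated in degree `0` (in fact a chain deformation
retraction onto its image). -/
theorem cobar_twisted_coextension_acyclic (C : CoaugDGCoalgebra) (hred : C.TwoReduced)
    (Ω : CobarData C) :
    -- `1 ↦ 1 ⊗ 1` is a chain map,
    (coextDiff C.toDGCoalgebra Ω.alg Ω.t Ω.alg.carrier Ω.alg.d Ω.alg.mulMap).comp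
        (LinearMap.toSpanSingleton ℚ (C.carrier ⊗[ℚ] Ω.alg.carrier)
          (C.one ⊗ₜ[ℚ] Ω.alg.one)) = 0 ∧
    -- a quasi-isomorphism,
    IsQuasiIso (0 : ℚ →ₗ[ℚ] ℚ)
      (coextDiff C.toDGCoalgebra Ω.alg Ω.t Ω.alg.carrier Ω.alg.d Ω.alg.mulMap)
      (LinearMap.toSpanSingleton ℚ (C.carrier ⊗[ℚ] Ω.alg.carrier)
        (C.one ⊗ₜ[ℚ] Ω.alg.one)) ∧
    -- and in fact a chain deformation retraction onto its image:
    ∃ (r : C.carrier ⊗[ℚ] Ω.alg.carrier →ₗ[ℚ] ℚ)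
      (s : C.carrier ⊗[ℚ] Ω.alg.carrier →ₗ[ℚ] C.carrier ⊗[ℚ] Ω.alg.carrier),
      r.comp (LinearMap.toSpanSingleton ℚ (C.carrier ⊗[ℚ] Ω.alg.carrier)
          (C.one ⊗ₜ[ℚ] Ω.alg.one)) = LinearMap.id ∧
      r.comp (coextDiff C.toDGCoalgebra Ω.alg Ω.t Ω.alg.carrier Ω.alg.d Ω.alg.mulMap)
          = 0 ∧
      (coextDiff C.toDGCoalgebra Ω.alg Ω.t Ω.alg.carrier Ω.alg.d Ω.alg.mulMap).comp s
          + s.comp (coextDiff C.toDGCoalgebra Ω.alg Ω.t Ω.alg.carrier Ω.alg.d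
              Ω.alg.mulMap)
        = LinearMap.id
          - (LinearMap.toSpanSingleton ℚ (C.carrier ⊗[ℚ] Ω.alg.carrier)
              (C.one ⊗ₜ[ℚ] Ω.alg.one)).comp r := by
  obtain ⟨e, e_one, e_mul, e_d, e_t, e_mem⟩ := CobarAcyclic.exists_aug C Ω
  obtain ⟨σ, hσd, hσt⟩ := CobarAcyclic.exists_sigma C Ω e e_one e_mul e_d e_t e_mem
  change (CobarAcyclic.dM C Ω).comp _ = 0 ∧ IsQuasiIso _ (CobarAcyclic.dM C Ω) _ ∧
    ∃ r s, _ ∧ LinearMap.comp r (CobarAcyclic.dM C Ω) = 0 ∧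
      (CobarAcyclic.dM C Ω).comp s + LinearMap.comp s (CobarAcyclic.dM C Ω) = _
  have h0 : (CobarAcyclic.dM C Ω).comp
        (LinearMap.toSpanSingleton ℚ (C.carrier ⊗[ℚ] Ω.alg.carrier)
          (C.one ⊗ₜ[ℚ] Ω.alg.one)) = 0 := by
    ext
    simp [CobarAcyclic.dM_one_tmul, CobarAcyclic.alg_d_one]
  let r : C.carrier ⊗[ℚ] Ω.alg.carrier →ₗ[ℚ] ℚ :=
    TensorProduct.lift ((LinearMap.mul ℚ ℚ).compl₁₂ C.counit e)
  let s : C.carrier ⊗[ℚ] Ω.alg.carrier →ₗ[ℚ] C.carrier ⊗[ℚ] Ω.alg.carrier :=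
    TensorProduct.lift ((LinearMap.lsmul ℚ (C.carrier ⊗[ℚ] Ω.alg.carrier)).compl₁₂ C.counit σ)
  have hr : ∀ c a, r (c ⊗ₜ[ℚ] a) = C.counit c * e a := fun c a => rfl
  have hs : ∀ c a, s (c ⊗ₜ[ℚ] a) = C.counit c • σ a := fun c a => rfl
  have hl : ∀ c, TensorProduct.lid ℚ C.carrier
      (TensorProduct.map C.counit LinearMap.id (C.comul c)) = c :=
    LinearMap.congr_fun C.counit_comul_left
  have hrphi : ∀ c m, r (CobarAcyclic.rM C Ω m (CobarAcyclic.phi C Ω c)) = 0 := by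
    intro c m
    rw [CobarAcyclic.phi, LinearMap.comp_apply]
    induction C.comul c with
    | zero => simp
    | add x y hx hy => simp only [map_add, hx, hy, add_zero]
    | tmul x y => simp [hr, e_mul, e_t]
  have hsphi : ∀ c m, s (CobarAcyclic.rM C Ω m (CobarAcyclic.phi C Ω c))
      = c ⊗ₜ[ℚ] m - C.counit c • (C.one ⊗ₜ[ℚ] m) := by
    intro c m
    rw [← hσt]
    conv_rhs => rw [← hl c]
    rw [CobarAcyclic.phi, LinearMap.comp_apply]
    induction C.comul c with
    | zero => simp
    | add x y hx hy => simp only [map_add, hx, hy, LinearMap.add_apply]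
    | tmul x y => simp [hs, CobarAcyclic.counit_parity]
  have h1 : r.comp (LinearMap.toSpanSingleton ℚ (C.carrier ⊗[ℚ] Ω.alg.carrier)
          (C.one ⊗ₜ[ℚ] Ω.alg.one)) = LinearMap.id := by
    ext
    simp [hr, e_one, C.counit_one]
  have h2 : r.comp (CobarAcyclic.dM C Ω) = 0 := by
    apply TensorProduct.ext'
    intro c m
    rw [LinearMap.comp_apply, CobarAcyclic.dM_tmul, map_add, map_add, hrphi, hr, hr,
      CobarAcyclic.counit_d, e_d]
    simp
  have h3 : (CobarAcyclic.dM C Ω).comp s + s.comp (CobarAcyclic.dM C Ω)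
      = LinearMap.id - (LinearMap.toSpanSingleton ℚ (C.carrier ⊗[ℚ] Ω.alg.carrier)
              (C.one ⊗ₜ[ℚ] Ω.alg.one)).comp r := by
    apply TensorProduct.ext'
    intro c m
    simp only [LinearMap.add_apply, LinearMap.sub_apply, LinearMap.comp_apply,
      CobarAcyclic.dM_tmul, map_add, hsphi, hs, hr, CobarAcyclic.counit_d,
      CobarAcyclic.counit_parity, map_smul, LinearMap.id_apply,
      LinearMap.toSpanSingleton_apply, hσd, CobarAcyclic.inn_apply, smul_sub, smul_smul,
      zero_smul]
    abel
  refine ⟨h0, ⟨?_, ?_⟩, r, s, h1, h2, h3⟩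
  · rintro x - ⟨y, hy⟩
    refine ⟨0, ?_⟩
    have := congrArg r hy
    rw [← LinearMap.comp_apply, ← LinearMap.comp_apply, h1, h2] at this
    simpa using this
  · intro w hw
    refine ⟨r w, rfl, s w, ?_⟩
    have := LinearMap.congr_fun h3 w
    simp only [LinearMap.add_apply, LinearMap.comp_apply, hw, map_zero, add_zero,
      LinearMap.sub_apply, LinearMap.id_apply] at this
    exact this.symm

end
end

section
/- Let C be a 2-reduced cocommutative dg coalgebra over ℚ and t : C ⇝ ΩC its universal twisting chain. If f : A → B is a quasi-isomorphism of left dg ΩC-modules, then the induced map t_*f : C ⊗^t A → C ⊗^t B is a quasi-isomorphism of C-comodules; that is, the twisted coextension functor t_* preserves quasi-isomorphisms. -/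
open scoped TensorProduct

noncomputable section

/-! ## Statement 5: `t_*` preserves quasi-isomorphisms -/

section aux

/-- The mapping cone differential. -/
def coneD {V W : Type} [AddCommGroup V] [Module ℚ V] [AddCommGroup W] [Module ℚ W]
    (dV : V →ₗ[ℚ] V) (dW : W →ₗ[ℚ] W) (f : V →ₗ[ℚ] W) : V × W →ₗ[ℚ] V × W :=
  LinearMap.prod (-(dV.comp (LinearMap.fst ℚ V W)))
    (f.comp (LinearMap.fst ℚ V W) + dW.comp (LinearMap.snd ℚ V W))

theorem coneD_apply {V W : Type} [AddCommGroup V] [Module ℚ V] [AddCommGroup W] [Module ℚ W]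
    (dV : V →ₗ[ℚ] V) (dW : W →ₗ[ℚ] W) (f : V →ₗ[ℚ] W) (x : V × W) :
    coneD dV dW f x = (-(dV x.1), f x.1 + dW x.2) := rfl

theorem coneD_sq {V W : Type} [AddCommGroup V] [Module ℚ V] [AddCommGroup W] [Module ℚ W]
    (dV : V →ₗ[ℚ] V) (dW : W →ₗ[ℚ] W) (f : V →ₗ[ℚ] W)
    (hV : ∀ x, dV (dV x) = 0) (hW : ∀ x, dW (dW x) = 0) (hf : ∀ x, f (dV x) = dW (f x))
    (x : V × W) : coneD dV dW f (coneD dV dW f x) = 0 := by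
  simp [coneD_apply, hV, hW, hf]

theorem cone_acyclic {V W : Type} [AddCommGroup V] [Module ℚ V] [AddCommGroup W] [Module ℚ W]
    (dV : V →ₗ[ℚ] V) (dW : W →ₗ[ℚ] W) (f : V →ₗ[ℚ] W)
    (hf : ∀ x, f (dV x) = dW (f x)) (hq : IsQuasiIso dV dW f)
    (x : V × W) (hx : coneD dV dW f x = 0) : ∃ y, coneD dV dW f y = x := by
  obtain ⟨a, b⟩ := x
  simp only [coneD_apply, Prod.mk_eq_zero, neg_eq_zero] at hx
  obtain ⟨h1, h2⟩ := hx
  obtain ⟨z, hz⟩ := hq.1 a h1 ⟨-b, by rw [map_neg]; exact eq_neg_of_add_eq_zero_left h2⟩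
  obtain ⟨x, hx, y, hy⟩ := hq.2 (f z + b) (by rw [map_add, ← hf, ← hz, h2])
  refine ⟨(x - z, y), ?_⟩
  simp only [coneD_apply, map_sub, hx, ← hz, ← hy, Prod.mk.injEq]
  constructor <;> abel

theorem quasiIso_of_cone {V W : Type} [AddCommGroup V] [Module ℚ V] [AddCommGroup W] [Module ℚ W]
    (dV : V →ₗ[ℚ] V) (dW : W →ₗ[ℚ] W) (f : V →ₗ[ℚ] W)
    (h : ∀ x, coneD dV dW f x = 0 → ∃ y, coneD dV dW f y = x) : IsQuasiIso dV dW f := by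
  constructor
  · rintro x hx ⟨y, hy⟩
    obtain ⟨z, hz⟩ := h (x, -y) (by simp [coneD_apply, hx, hy])
    simp only [coneD_apply, Prod.mk.injEq] at hz
    exact ⟨-z.1, by rw [map_neg, hz.1]⟩
  · intro w hw
    obtain ⟨z, hz⟩ := h (0, w) (by simp [coneD_apply, hw])
    simp only [coneD_apply, Prod.mk.injEq, neg_eq_zero] at hz
    exact ⟨z.1, hz.1, z.2, by rw [← hz.2]; abel⟩

/-- An acyclic complex over a field is contractible. -/
theorem exists_contraction {M : Type} [AddCommGroup M] [Module ℚ M] (d : M →ₗ[ℚ] M)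
    (hd : ∀ x, d (d x) = 0) (h : ∀ x, d x = 0 → ∃ y, d y = x) :
    ∃ s : M →ₗ[ℚ] M, ∀ x, d (s x) + s (d x) = x := by
  let d' : M →ₗ[ℚ] LinearMap.ker d := d.codRestrict _ (fun x => hd x)
  have hs : Function.Surjective d' := by
    rintro ⟨x, hx⟩
    obtain ⟨y, hy⟩ := h x hx
    exact ⟨y, Subtype.ext hy⟩
  obtain ⟨r, hr⟩ := d'.exists_rightInverse_of_surjective (LinearMap.range_eq_top.2 hs)
  have hr' : ∀ z : LinearMap.ker d, d (r z) = z := fun z =>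
    congrArg Subtype.val (LinearMap.congr_fun hr z)
  let e : M →ₗ[ℚ] LinearMap.ker d := (LinearMap.id - r.comp d').codRestrict _ (by
    intro x
    simp only [LinearMap.mem_ker, LinearMap.sub_apply, LinearMap.id_apply, LinearMap.comp_apply,
      map_sub, hr']
    exact sub_self _)
  refine ⟨r.comp e, fun x => ?_⟩
  have e2 : e (d x) = d' x := by
    apply Subtype.ext
    change d x - r (d' (d x)) = d x
    have : d' (d x) = 0 := Subtype.ext (hd x)
    rw [this, map_zero, sub_zero]
  simp only [LinearMap.comp_apply, hr', e2]
  change x - r (d' x) + r (d' x) = x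
  abel

theorem parityOf_apply {V : Type} [AddCommGroup V] [Module ℚ V] (g : ℤ → Submodule ℚ V)
    [DirectSum.Decomposition g] (n : ℤ) (x : V) (hx : x ∈ g n) :
    parityOf g x = ((-1 : ℚ) ^ n) • x := by
  lift x to g n using hx
  simp only [parityOf, signOpOf, one_mul, LinearMap.comp_apply, LinearEquiv.coe_coe,
    DirectSum.decomposeLinearEquiv_apply, DirectSum.decompose_coe]
  rw [← DirectSum.lof_eq_of ℚ, DirectSum.toModule_lof]
  rfl

theorem homog_ind {V : Type} [AddCommGroup V] [Module ℚ V] (g : ℤ → Submodule ℚ V)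
    [DirectSum.Decomposition g] {W : Type} [AddCommGroup W] [Module ℚ W] (u v : V →ₗ[ℚ] W)
    (h : ∀ n, ∀ x ∈ g n, u x = v x) : u = v := by
  ext x
  induction x using DirectSum.Decomposition.inductionOn g with
  | zero => simp
  | homogeneous m => exact h _ _ m.2
  | add a b ha hb => rw [map_add, map_add, ha, hb]

theorem negone_sq (n : ℤ) : ((-1 : ℚ) ^ n) * ((-1 : ℚ) ^ n) = 1 := by
  rw [← mul_zpow]; simp

theorem parityOf_parityOf {V : Type} [AddCommGroup V] [Module ℚ V] (g : ℤ → Submodule ℚ V)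
    [DirectSum.Decomposition g] : (parityOf g).comp (parityOf g) = LinearMap.id := by
  apply homog_ind g
  intro n x hx
  simp only [LinearMap.comp_apply, LinearMap.id_apply, parityOf_apply g n x hx, map_smul, smul_smul,
    negone_sq, one_smul]

theorem parityOf_d (V : DGVect) :
    (parityOf V.grading).comp V.d = -(V.d.comp (parityOf V.grading)) := by
  apply homog_ind V.grading
  intro n x hx
  rw [LinearMap.comp_apply, parityOf_apply _ _ _ (V.d_mem n x hx), LinearMap.neg_apply,
    LinearMap.comp_apply, parityOf_apply _ _ _ hx, map_smul, ← neg_smul, zpow_sub_one₀ (by norm_num)]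
  norm_num

/-- Induction principle for the graded pieces of a tensor product. -/
theorem tensorGrading_le {V W : Type} [AddCommGroup V] [Module ℚ V] [AddCommGroup W] [Module ℚ W]
    (gV : ℤ → Submodule ℚ V) (gW : ℤ → Submodule ℚ W) (n : ℤ) (P : Submodule ℚ (V ⊗[ℚ] W))
    (h : ∀ i j, i + j = n → ∀ x ∈ gV i, ∀ y ∈ gW j, x ⊗ₜ[ℚ] y ∈ P) :
    tensorGrading gV gW n ≤ P := by
  refine iSup_le ?_
  rintro ⟨⟨i, j⟩, hij⟩
  rintro _ ⟨z, rfl⟩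
  induction z using TensorProduct.induction_on with
  | zero => simp
  | tmul x y => exact h i j hij x x.2 y y.2
  | add a b ha hb => rw [map_add]; exact P.add_mem ha hb

theorem comul_parity (C : DGCoalgebra) :
    C.comul.comp (parityOf C.grading)
      = (TensorProduct.map (parityOf C.grading) (parityOf C.grading)).comp C.comul := by
  apply homog_ind C.grading
  intro n x hx
  rw [LinearMap.comp_apply, parityOf_apply _ _ _ hx, map_smul, LinearMap.comp_apply]
  have : tensorGrading C.grading C.grading n ≤ LinearMap.eqLocus
      (((-1 : ℚ) ^ n) • LinearMap.id)
      (TensorProduct.map (parityOf C.grading) (parityOf C.grading)) := by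
    apply tensorGrading_le
    intro i j hij x hx y hy
    rw [LinearMap.mem_eqLocus, TensorProduct.map_tmul, parityOf_apply _ _ _ hx,
      parityOf_apply _ _ _ hy, TensorProduct.smul_tmul_smul, ← zpow_add₀ (by norm_num), hij]
    rfl
  exact this (C.comul_mem n x hx)

/-- `c ↦ τ(c) m`. -/
def tactAt {C : DGCoalgebra} {A : DGAlgebra} (τ : TwistingChain C A) (M : DGModule A)
    (m : M.carrier) : C.carrier →ₗ[ℚ] M.carrier := (M.smul.flip m).comp τ.toFun

theorem tactAt_apply {C : DGCoalgebra} {A : DGAlgebra} (τ : TwistingChain C A) (M : DGModule A)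
    (m : M.carrier) (c : C.carrier) : tactAt τ M m c = M.smul (τ.toFun c) m := rfl

/-- The twisting part of the differential. -/
def twistPart {C : DGCoalgebra} {A : DGAlgebra} (τ : TwistingChain C A) (M : DGModule A) :
    C.carrier ⊗[ℚ] M.carrier →ₗ[ℚ] C.carrier ⊗[ℚ] M.carrier :=
  (TensorProduct.map (parityOf C.grading)
    (M.actionMap.comp (TensorProduct.map τ.toFun LinearMap.id))).comp (coextCoact C M.carrier)

theorem twistPart_tmul {C : DGCoalgebra} {A : DGAlgebra} (τ : TwistingChain C A) (M : DGModule A)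
    (c : C.carrier) (m : M.carrier) :
    twistPart τ M (c ⊗ₜ m) = TensorProduct.map (parityOf C.grading) (tactAt τ M m) (C.comul c) := by
  simp only [twistPart, coextCoact, LinearMap.comp_apply, TensorProduct.map_tmul,
    LinearMap.id_apply, LinearEquiv.coe_coe]
  induction C.comul c using TensorProduct.induction_on with
  | zero => simp
  | tmul x y => simp [DGModule.actionMap, tactAt_apply]
  | add a b ha hb => rw [TensorProduct.add_tmul, map_add, map_add, map_add, ha, hb]

theorem coextDiff_tmul {C : DGCoalgebra} {A : DGAlgebra} (τ : TwistingChain C A) (M : DGModule A)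
    (c : C.carrier) (m : M.carrier) :
    coextDiff C A τ M.carrier M.d M.actionMap (c ⊗ₜ m) =
      C.d c ⊗ₜ m + parityOf C.grading c ⊗ₜ M.d m
        + TensorProduct.map (parityOf C.grading) (tactAt τ M m) (C.comul c) := by
  rw [← twistPart_tmul]
  rfl

theorem d_tactAt {C : DGCoalgebra} {A : DGAlgebra} (τ : TwistingChain C A) (M : DGModule A)
    (m : M.carrier) : M.d.comp (tactAt τ M m) + (tactAt τ M (M.d m)).comp (parityOf C.grading)
      = ((M.smul.flip m).comp A.d).comp τ.toFun := by
  apply homog_ind C.grading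
  intro n c hc
  simp only [LinearMap.add_apply, LinearMap.comp_apply, tactAt_apply, LinearMap.flip_apply,
    parityOf_apply _ _ _ hc, map_smul, LinearMap.smul_apply, M.leibniz _ _ m (τ.mem n c hc)]
  rw [add_assoc, ← add_smul, zpow_sub_one₀ (by norm_num)]
  norm_num

theorem coextDiff_sq {C : DGCoalgebra} {A : DGAlgebra} (τ : TwistingChain C A) (M : DGModule A) :
    (coextDiff C A τ M.carrier M.d M.actionMap).comp
      (coextDiff C A τ M.carrier M.d M.actionMap) = 0 := by
  set σ := parityOf C.grading with hσ
  have σσ : ∀ x, σ (σ x) = x := fun x => LinearMap.congr_fun (parityOf_parityOf C.grading) x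
  have σd : ∀ x, σ (C.d x) = -C.d (σ x) := fun x => LinearMap.congr_fun (parityOf_d C.toDGVect) x
  have dd : ∀ x, C.d (C.d x) = 0 := fun x => LinearMap.congr_fun C.d_sq x
  have ddM : ∀ x, M.d (M.d x) = 0 := fun x => LinearMap.congr_fun M.d_sq x
  have Δd : ∀ x, C.comul (C.d x) = TensorProduct.map C.d LinearMap.id (C.comul x)
      + TensorProduct.map σ C.d (C.comul x) := fun x => LinearMap.congr_fun C.comul_chain x
  have Δσ : ∀ x, C.comul (σ x) = TensorProduct.map σ σ (C.comul x) :=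
    fun x => LinearMap.congr_fun (comul_parity C) x
  ext c m
  change (coextDiff C A τ M.carrier M.d M.actionMap)
    ((coextDiff C A τ M.carrier M.d M.actionMap) (c ⊗ₜ m)) = 0
  rw [coextDiff_tmul, map_add, map_add, coextDiff_tmul, coextDiff_tmul]
  simp only [dd, ddM, TensorProduct.zero_tmul, TensorProduct.tmul_zero, zero_add, add_zero, ← hσ,
    σσ, σd, Δd, Δσ, map_add]
  set u := tactAt τ M m with hu
  -- the quadratic term
  let w : C.carrier ⊗[ℚ] C.carrier →ₗ[ℚ] M.carrier :=
    (M.smul.flip m).comp (A.mulMap.comp (TensorProduct.map (τ.toFun.comp σ) τ.toFun))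
  have key : ∀ z : C.carrier ⊗[ℚ] C.carrier,
      coextDiff C A τ M.carrier M.d M.actionMap (TensorProduct.map σ u z)
      = TensorProduct.map (C.d.comp σ) u z + TensorProduct.map LinearMap.id (M.d.comp u) z
        + TensorProduct.map LinearMap.id w
          (TensorProduct.assoc ℚ C.carrier C.carrier C.carrier
            (TensorProduct.map C.comul LinearMap.id z)) := by
    intro z
    induction z using TensorProduct.induction_on with
    | zero => simp
    | tmul x y =>
      rw [TensorProduct.map_tmul, coextDiff_tmul, ← hσ, σσ, Δσ]
      simp only [TensorProduct.map_tmul, LinearMap.comp_apply, LinearMap.id_apply]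
      congr 1
      induction C.comul x using TensorProduct.induction_on with
      | zero => simp
      | tmul p q =>
        simp [w, σσ, tactAt_apply, hu, DGAlgebra.mulMap, M.mul_smul']
      | add a b ha hb =>
        rw [TensorProduct.add_tmul, map_add, map_add, map_add, map_add, ha, hb]
    | add a b ha hb => simp only [map_add, ha, hb]; abel
  have hco : TensorProduct.assoc ℚ C.carrier C.carrier C.carrier
      (TensorProduct.map C.comul LinearMap.id (C.comul c))
      = TensorProduct.map LinearMap.id C.comul (C.comul c) := LinearMap.congr_fun C.coassoc c
  rw [key, hco]
  have tw : ∀ x, M.d (u x) + tactAt τ M (M.d m) (σ x) + u (C.d x) + w (C.comul x) = 0 := by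
    intro x
    have h1 := LinearMap.congr_fun (d_tactAt τ M m) x
    have h2 := congrArg (M.smul.flip m) (LinearMap.congr_fun τ.twist x)
    simp only [LinearMap.add_apply, LinearMap.comp_apply, map_add, LinearMap.zero_apply, map_zero]
      at h1 h2
    rw [h1]
    exact h2
  have HZ : ∀ z : C.carrier ⊗[ℚ] C.carrier,
      TensorProduct.map (C.d.comp σ) u z + TensorProduct.map LinearMap.id (M.d.comp u) z
        + TensorProduct.map LinearMap.id w (TensorProduct.map LinearMap.id C.comul z)
        + TensorProduct.map σ u (TensorProduct.map C.d LinearMap.id z)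
        + TensorProduct.map σ u (TensorProduct.map σ C.d z)
        + TensorProduct.map σ (tactAt τ M (M.d m)) (TensorProduct.map σ σ z) = 0 := by
    intro z
    induction z using TensorProduct.induction_on with
    | zero => simp
    | tmul x y =>
      have := congrArg (fun t => x ⊗ₜ[ℚ] t) (tw y)
      simp only [TensorProduct.tmul_add, TensorProduct.tmul_zero] at this
      simp only [TensorProduct.map_tmul, LinearMap.comp_apply, LinearMap.id_apply, σσ, σd,
        TensorProduct.neg_tmul]
      rw [← this]
      abel
    | add a b ha hb =>
      have := congrArg₂ (· + ·) ha hb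
      simp only [add_zero] at this
      rw [← this]
      simp only [map_add]
      abel
  rw [← HZ (C.comul c), TensorProduct.neg_tmul]
  abel

theorem coextDiff_map {C : DGCoalgebra} {A : DGAlgebra} (τ : TwistingChain C A) (M N : DGModule A)
    (f : M.carrier →ₗ[ℚ] N.carrier) (hf : IsModuleHom A M N f) :
    (coextDiff C A τ N.carrier N.d N.actionMap).comp (TensorProduct.map LinearMap.id f)
      = (TensorProduct.map LinearMap.id f).comp
          (coextDiff C A τ M.carrier M.d M.actionMap) := by
  have hd : ∀ x, f (M.d x) = N.d (f x) := fun x => LinearMap.congr_fun hf.2.1 x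
  have ha : ∀ a x, f (M.smul a x) = N.smul a (f x) := fun a x => by
    simpa [DGModule.actionMap] using LinearMap.congr_fun hf.2.2 (a ⊗ₜ x)
  ext c m
  change coextDiff C A τ N.carrier N.d N.actionMap (c ⊗ₜ f m) =
    TensorProduct.map LinearMap.id f (coextDiff C A τ M.carrier M.d M.actionMap (c ⊗ₜ m))
  rw [coextDiff_tmul, coextDiff_tmul]
  simp only [map_add, TensorProduct.map_tmul, LinearMap.id_apply, hd]
  congr 1
  generalize C.comul c = z
  induction z using TensorProduct.induction_on with
  | zero => simp
  | tmul x y => simp [tactAt_apply, ha]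
  | add a b h1 h2 => simp only [map_add, h1, h2]

/-- The filtration of `C ⊗ M` by the degree in `C`. -/
def fil (C : DGCoalgebra) (M : Type) [AddCommGroup M] [Module ℚ M] (p : ℤ) :
    Submodule ℚ (C.carrier ⊗[ℚ] M) :=
  Submodule.span ℚ {x | ∃ i < p, ∃ c ∈ C.grading i, ∃ m : M, x = c ⊗ₜ m}

theorem tmul_mem_fil (C : DGCoalgebra) (M : Type) [AddCommGroup M] [Module ℚ M] {p i : ℤ}
    (hi : i < p) {c : C.carrier} (hc : c ∈ C.grading i) (m : M) : c ⊗ₜ m ∈ fil C M p :=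
  Submodule.subset_span ⟨i, hi, c, hc, m, rfl⟩

theorem map_mem_fil (C : DGCoalgebra) {M N : Type} [AddCommGroup M] [Module ℚ M]
    [AddCommGroup N] [Module ℚ N] {p q : ℤ} (L : C.carrier ⊗[ℚ] M →ₗ[ℚ] C.carrier ⊗[ℚ] N)
    (h : ∀ i < p, ∀ c ∈ C.grading i, ∀ m : M, L (c ⊗ₜ m) ∈ fil C N q)
    {x : C.carrier ⊗[ℚ] M} (hx : x ∈ fil C M p) : L x ∈ fil C N q := by
  have : fil C M p ≤ (fil C N q).comap L := by
    refine Submodule.span_le.2 ?_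
    rintro _ ⟨i, hi, c, hc, m, rfl⟩
    exact h i hi c hc m
  exact this hx

theorem fil_mono (C : DGCoalgebra) (M : Type) [AddCommGroup M] [Module ℚ M] {p q : ℤ}
    (h : p ≤ q) : fil C M p ≤ fil C M q := by
  apply Submodule.span_mono
  rintro _ ⟨i, hi, c, hc, m, rfl⟩
  exact ⟨i, by omega, c, hc, m, rfl⟩

theorem fil_zero (C : DGCoalgebra) (M : Type) [AddCommGroup M] [Module ℚ M] :
    fil C M 0 = ⊥ := by
  rw [fil, Submodule.span_eq_bot]
  rintro _ ⟨i, hi, c, hc, m, rfl⟩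
  rw [C.nonneg i hi, Submodule.mem_bot] at hc
  rw [hc, TensorProduct.zero_tmul]

theorem exists_mem_fil (C : DGCoalgebra) (M : Type) [AddCommGroup M] [Module ℚ M]
    (x : C.carrier ⊗[ℚ] M) : ∃ p : ℕ, x ∈ fil C M p := by
  induction x using TensorProduct.induction_on with
  | zero => exact ⟨0, Submodule.zero_mem _⟩
  | tmul c m =>
    induction c using DirectSum.Decomposition.inductionOn C.grading with
    | zero => exact ⟨0, by rw [TensorProduct.zero_tmul]; exact Submodule.zero_mem _⟩
    | @homogeneous i c => exact ⟨(i + 1).toNat, tmul_mem_fil C M (by omega) c.2 m⟩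
    | add a b ha hb =>
      obtain ⟨p, hp⟩ := ha
      obtain ⟨q, hq⟩ := hb
      refine ⟨max p q, ?_⟩
      rw [TensorProduct.add_tmul]
      exact Submodule.add_mem _ (fil_mono C M (by simp) hp) (fil_mono C M (by simp) hq)
  | add a b ha hb =>
    obtain ⟨p, hp⟩ := ha
    obtain ⟨q, hq⟩ := hb
    exact ⟨max p q, Submodule.add_mem _ (fil_mono C M (by simp) hp) (fil_mono C M (by simp) hq)⟩

theorem parity_mem (C : DGCoalgebra) {i : ℤ} {c : C.carrier} (hc : c ∈ C.grading i) :
    parityOf C.grading c ∈ C.grading i := by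
  rw [parityOf_apply _ _ _ hc]
  exact Submodule.smul_mem _ _ hc

theorem map_parity_fil (C : DGCoalgebra) {M N : Type} [AddCommGroup M] [Module ℚ M]
    [AddCommGroup N] [Module ℚ N] (u : M →ₗ[ℚ] N) {p : ℤ}
    {x : C.carrier ⊗[ℚ] M} (hx : x ∈ fil C M p) :
    TensorProduct.map (parityOf C.grading) u x ∈ fil C N p :=
  map_mem_fil C _ (fun _ hi _ hc _ => tmul_mem_fil C N hi (parity_mem C hc) _) hx

theorem map_id_fil (C : DGCoalgebra) {M N : Type} [AddCommGroup M] [Module ℚ M]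
    [AddCommGroup N] [Module ℚ N] (u : M →ₗ[ℚ] N) {p : ℤ}
    {x : C.carrier ⊗[ℚ] M} (hx : x ∈ fil C M p) :
    TensorProduct.map (LinearMap.id : C.carrier →ₗ[ℚ] C.carrier) u x ∈ fil C N p :=
  map_mem_fil C _ (fun _ hi _ hc _ => tmul_mem_fil C N hi hc _) hx

/-- The part of the differential lowering the filtration. -/
def lowPart {C : DGCoalgebra} {A : DGAlgebra} (τ : TwistingChain C A) (M : DGModule A) :
    C.carrier ⊗[ℚ] M.carrier →ₗ[ℚ] C.carrier ⊗[ℚ] M.carrier :=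
  TensorProduct.map C.d LinearMap.id + twistPart τ M

theorem coextDiff_eq {C : DGCoalgebra} {A : DGAlgebra} (τ : TwistingChain C A) (M : DGModule A)
    (x : C.carrier ⊗[ℚ] M.carrier) : coextDiff C A τ M.carrier M.d M.actionMap x =
      TensorProduct.map (parityOf C.grading) M.d x + lowPart τ M x := by
  change TensorProduct.map C.d LinearMap.id x + TensorProduct.map (parityOf C.grading) M.d x
    + twistPart τ M x = TensorProduct.map (parityOf C.grading) M.d x +
      (TensorProduct.map C.d LinearMap.id x + twistPart τ M x)
  abel

theorem lowPart_fil {C : DGCoalgebra} {A : DGAlgebra} (τ : TwistingChain C A) (M : DGModule A)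
    (h0 : ∀ c ∈ C.grading 0, τ.toFun c = 0) {p : ℤ} {x : C.carrier ⊗[ℚ] M.carrier}
    (hx : x ∈ fil C M.carrier (p + 1)) : lowPart τ M x ∈ fil C M.carrier p := by
  refine map_mem_fil C _ (fun n hn c hc m => ?_) hx
  refine Submodule.add_mem _ (tmul_mem_fil C _ (i := n - 1) (by omega) (C.d_mem n c hc) _) ?_
  rw [twistPart_tmul]
  have : tensorGrading C.grading C.grading n ≤ (fil C M.carrier p).comap
      (TensorProduct.map (parityOf C.grading) (tactAt τ M m)) := by
    apply tensorGrading_le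
    intro i j hij x hx y hy
    rw [Submodule.mem_comap, TensorProduct.map_tmul]
    rcases lt_or_ge 0 j with hj | hj
    · exact tmul_mem_fil C _ (i := i) (by omega) (parity_mem C hx) _
    · have : τ.toFun y = 0 := by
        rcases hj.lt_or_eq with hj | hj
        · rw [C.nonneg j hj, Submodule.mem_bot] at hy
          rw [hy, map_zero]
        · exact h0 y (hj ▸ hy)
      rw [tactAt_apply, this, map_zero, LinearMap.zero_apply, TensorProduct.tmul_zero]
      exact Submodule.zero_mem _
  exact this (C.comul_mem n c hc)

theorem coext_cone_acyclic {C : DGCoalgebra} {A : DGAlgebra} (τ : TwistingChain C A)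
    (h0 : ∀ c ∈ C.grading 0, τ.toFun c = 0) (M N : DGModule A)
    (f : M.carrier →ₗ[ℚ] N.carrier) (hf : IsModuleHom A M N f)
    (s : M.carrier × N.carrier →ₗ[ℚ] M.carrier × N.carrier)
    (hs : ∀ x, coneD M.d N.d f (s x) + s (coneD M.d N.d f x) = x) (p : ℕ) :
    ∀ x : (C.carrier ⊗[ℚ] M.carrier) × (C.carrier ⊗[ℚ] N.carrier),
      x.1 ∈ fil C M.carrier p → x.2 ∈ fil C N.carrier p →
      coneD (coextDiff C A τ M.carrier M.d M.actionMap)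
        (coextDiff C A τ N.carrier N.d N.actionMap) (TensorProduct.map LinearMap.id f) x = 0 →
      ∃ y, coneD (coextDiff C A τ M.carrier M.d M.actionMap)
        (coextDiff C A τ N.carrier N.d N.actionMap) (TensorProduct.map LinearMap.id f) y = x := by
  induction p with
  | zero =>
    rintro ⟨v, w⟩ hv hw -
    simp only [Nat.cast_zero, fil_zero, Submodule.mem_bot] at hv hw
    exact ⟨0, by rw [map_zero, hv, hw]; rfl⟩
  | succ p ih =>
    rintro ⟨v, w⟩ hv hw hx
    simp only [Nat.cast_add, Nat.cast_one] at hv hw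
    have σσ : ∀ x, parityOf C.grading (parityOf C.grading x) = x :=
      fun x => LinearMap.congr_fun (parityOf_parityOf C.grading) x
    -- blocks of the contraction `s`, with signs
    let s11 := (LinearMap.fst ℚ _ _).comp (s.comp (LinearMap.inl ℚ _ _))
    let s12 := (LinearMap.fst ℚ _ _).comp (s.comp (LinearMap.inr ℚ _ _))
    let s21 := (LinearMap.snd ℚ _ _).comp (s.comp (LinearMap.inl ℚ _ _))
    let s22 := (LinearMap.snd ℚ _ _).comp (s.comp (LinearMap.inr ℚ _ _))
    have hs' : ∀ a b, s (a, b) = (s11 a + s12 b, s21 a + s22 b) := by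
      intro a b
      have : ((a, b) : M.carrier × N.carrier) = (a, 0) + (0, b) := by simp
      rw [this, map_add]
      rfl
    have e1 : ∀ a, -M.d (s11 a) - s11 (M.d a) + s12 (f a) = a := fun a => by
      have := congrArg Prod.fst (hs (a, 0))
      simp only [coneD_apply, hs', map_zero, add_zero, map_neg, Prod.fst_add] at this
      rw [sub_eq_add_neg, add_assoc]; exact this
    have e2 : ∀ a, f (s11 a) + N.d (s21 a) - s21 (M.d a) + s22 (f a) = 0 := fun a => by
      have := congrArg Prod.snd (hs (a, 0))
      simp only [coneD_apply, hs', map_zero, add_zero, map_neg, Prod.snd_add] at this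
      rw [← this]; abel
    have e3 : ∀ b, -M.d (s12 b) + s12 (N.d b) = 0 := fun b => by
      have := congrArg Prod.fst (hs (0, b))
      simpa only [coneD_apply, hs', map_zero, zero_add, map_neg, Prod.fst_add, neg_zero] using this
    have e4 : ∀ b, f (s12 b) + N.d (s22 b) + s22 (N.d b) = b := fun b => by
      have := congrArg Prod.snd (hs (0, b))
      simpa only [coneD_apply, hs', map_zero, zero_add, map_neg, Prod.snd_add, neg_zero] using this
    let σ := parityOf C.grading
    let I : C.carrier →ₗ[ℚ] C.carrier := LinearMap.id
    have E1 : ∀ v, -TensorProduct.map σ M.d (TensorProduct.map σ s11 v)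
        - TensorProduct.map σ s11 (TensorProduct.map σ M.d v)
        + TensorProduct.map I s12 (TensorProduct.map I f v) = v := fun v => by
      induction v using TensorProduct.induction_on with
      | zero => simp
      | tmul c a =>
        conv_rhs => rw [← e1 a]
        simp [σ, I, σσ, TensorProduct.tmul_add, TensorProduct.tmul_sub, TensorProduct.tmul_neg]
      | add a b ha hb =>
        conv_rhs => rw [← ha, ← hb]
        simp only [map_add]; abel
    have E2 : ∀ v, TensorProduct.map I f (TensorProduct.map σ s11 v)
        + TensorProduct.map σ N.d (TensorProduct.map I s21 v)
        - TensorProduct.map I s21 (TensorProduct.map σ M.d v)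
        + TensorProduct.map σ s22 (TensorProduct.map I f v) = 0 := fun v => by
      induction v using TensorProduct.induction_on with
      | zero => simp
      | tmul c a =>
        have := congrArg (fun t => σ c ⊗ₜ[ℚ] t) (e2 a)
        simpa [σ, I, σσ, TensorProduct.tmul_add, TensorProduct.tmul_sub, TensorProduct.tmul_neg]
          using this
      | add a b ha hb =>
        have := congrArg₂ (· + ·) ha hb
        simp only [add_zero] at this
        rw [← this]
        simp only [map_add]; abel
    have E3 : ∀ w, -TensorProduct.map σ M.d (TensorProduct.map I s12 w)
        + TensorProduct.map I s12 (TensorProduct.map σ N.d w) = 0 := fun w => by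
      induction w using TensorProduct.induction_on with
      | zero => simp
      | tmul c a =>
        have := congrArg (fun t => σ c ⊗ₜ[ℚ] t) (e3 a)
        simpa [σ, I, σσ, TensorProduct.tmul_add, TensorProduct.tmul_sub, TensorProduct.tmul_neg]
          using this
      | add a b ha hb =>
        rw [neg_add_eq_zero] at *
        simp only [map_add, ha, hb]
    have E4 : ∀ w, TensorProduct.map I f (TensorProduct.map I s12 w)
        + TensorProduct.map σ N.d (TensorProduct.map σ s22 w)
        + TensorProduct.map σ s22 (TensorProduct.map σ N.d w) = w := fun w => by
      induction w using TensorProduct.induction_on with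
      | zero => simp
      | tmul c a =>
        conv_rhs => rw [← e4 a]
        simp [σ, I, σσ, TensorProduct.tmul_add]
      | add a b ha hb =>
        conv_rhs => rw [← ha, ← hb]
        simp only [map_add]; abel
    simp only [coneD_apply, Prod.mk_eq_zero, neg_eq_zero, coextDiff_eq] at hx
    obtain ⟨hx1, hx2⟩ := hx
    have hx1' : TensorProduct.map σ M.d v = -lowPart τ M v := eq_neg_of_add_eq_zero_left hx1
    have hx2' : TensorProduct.map σ N.d w = -lowPart τ N w - TensorProduct.map I f v := by
      rw [← sub_eq_zero, ← hx2]; simp only [σ, I]; abel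
    let y1 := TensorProduct.map σ s11 v + TensorProduct.map I s12 w
    let y2 := TensorProduct.map I s21 v + TensorProduct.map σ s22 w
    have hy1 : y1 ∈ fil C M.carrier (p + 1) :=
      Submodule.add_mem _ (map_parity_fil C _ hv) (map_id_fil C _ hw)
    have hy2 : y2 ∈ fil C N.carrier (p + 1) :=
      Submodule.add_mem _ (map_id_fil C _ hv) (map_parity_fil C _ hw)
    let DE := coneD (coextDiff C A τ M.carrier M.d M.actionMap)
        (coextDiff C A τ N.carrier N.d N.actionMap) (TensorProduct.map LinearMap.id f)
    have hlv := lowPart_fil τ M h0 hv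
    have hlw := lowPart_fil τ N h0 hw
    have k1 : ((v, w) - DE (y1, y2)).1 = TensorProduct.map σ s11 (lowPart τ M v)
        - TensorProduct.map I s12 (lowPart τ N w) + lowPart τ M y1 := by
      have a1 := E1 v
      have a3 := E3 w
      rw [hx1'] at a1
      rw [hx2'] at a3
      simp only [map_neg, map_sub] at a1 a3
      have hy : TensorProduct.map σ M.d y1 = TensorProduct.map σ M.d (TensorProduct.map σ s11 v)
        + TensorProduct.map σ M.d (TensorProduct.map I s12 w) := map_add _ _ _
      simp only [DE, coneD_apply, coextDiff_eq, Prod.fst_sub]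
      change v - -(TensorProduct.map σ M.d y1 + lowPart τ M y1) = _
      rw [hy]
      linear_combination (norm := module) -a1 - a3
    have k2 : ((v, w) - DE (y1, y2)).2 = TensorProduct.map I s21 (lowPart τ M v)
        - TensorProduct.map σ s22 (lowPart τ N w) - lowPart τ N y2 := by
      have a2 := E2 v
      have a4 := E4 w
      rw [hx1'] at a2
      rw [hx2'] at a4
      simp only [map_neg, map_sub] at a2 a4
      have hy : TensorProduct.map σ N.d y2 = TensorProduct.map σ N.d (TensorProduct.map I s21 v)
        + TensorProduct.map σ N.d (TensorProduct.map σ s22 w) := map_add _ _ _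
      have hy' : TensorProduct.map I f y1 = TensorProduct.map I f (TensorProduct.map σ s11 v)
        + TensorProduct.map I f (TensorProduct.map I s12 w) := map_add _ _ _
      simp only [DE, coneD_apply, coextDiff_eq, Prod.snd_sub]
      change w - (TensorProduct.map I f y1 + (TensorProduct.map σ N.d y2 + lowPart τ N y2)) = _
      rw [hy, hy']
      linear_combination (norm := module) -a2 - a4
    obtain ⟨z, hz⟩ := ih ((v, w) - DE (y1, y2)) (by
        rw [k1]
        exact Submodule.add_mem _ (Submodule.sub_mem _ (map_parity_fil C _ hlv)
          (map_id_fil C _ hlw)) (lowPart_fil τ M h0 hy1)) (by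
        rw [k2]
        exact Submodule.sub_mem _ (Submodule.sub_mem _ (map_id_fil C _ hlv)
          (map_parity_fil C _ hlw)) (lowPart_fil τ N h0 hy2)) (by
        rw [map_sub]
        have hsq : DE (DE (y1, y2)) = 0 := coneD_sq _ _ _
          (fun x => LinearMap.congr_fun (coextDiff_sq τ M) x)
          (fun x => LinearMap.congr_fun (coextDiff_sq τ N) x)
          (fun x => (LinearMap.congr_fun (coextDiff_map τ M N f hf) x).symm) _
        have hx0 : DE (v, w) = 0 := by
          simp only [DE, coneD_apply, Prod.mk_eq_zero, neg_eq_zero, coextDiff_eq]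
          exact ⟨hx1, hx2⟩
        exact (congrArg₂ (· - ·) hx0 hsq).trans (sub_zero _))
    refine ⟨z + (y1, y2), ?_⟩
    rw [map_add, hz]
    exact sub_add_cancel _ _

end aux

/-- For a 2-reduced cocommutative dg coalgebra `C` with universal
twisting chain `t : C ⇝ ΩC`, if `f : A → B` is a quasi-isomorphism of left dg
`ΩC`-modules then the induced map `t_*f = id_C ⊗ f : C ⊗^t A → C ⊗^t B` is a
quasi-isomorphism of `C`-comodules. -/
theorem twisted_coextension_preserves_quasiIso (C : CoaugDGCoalgebra)
    (hred : C.TwoReduced) (hcc : C.toDGCoalgebra.Cocomm) (Ω : CobarData C)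
    (A B : DGModule Ω.alg) (f : A.carrier →ₗ[ℚ] B.carrier)
    (hf : IsModuleHom Ω.alg A B f) (hq : IsQuasiIso A.d B.d f) :
    -- `t_* f` is a chain map of the twisted coextensions,
    (coextDiff C.toDGCoalgebra Ω.alg Ω.t B.carrier B.d B.actionMap).comp
        (TensorProduct.map LinearMap.id f)
      = (TensorProduct.map LinearMap.id f).comp
          (coextDiff C.toDGCoalgebra Ω.alg Ω.t A.carrier A.d A.actionMap) ∧
    -- colinear,
    (TensorProduct.map LinearMap.id (TensorProduct.map LinearMap.id f)).comp
        (coextCoact C.toDGCoalgebra A.carrier)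
      = (coextCoact C.toDGCoalgebra B.carrier).comp (TensorProduct.map LinearMap.id f) ∧
    -- and a quasi-isomorphism:
    IsQuasiIso
      (coextDiff C.toDGCoalgebra Ω.alg Ω.t A.carrier A.d A.actionMap)
      (coextDiff C.toDGCoalgebra Ω.alg Ω.t B.carrier B.d B.actionMap)
      (TensorProduct.map LinearMap.id f) := by
  have hd : ∀ x, f (A.d x) = B.d (f x) := fun x => LinearMap.congr_fun hf.2.1 x
  refine ⟨coextDiff_map Ω.t A B f hf, ?_, ?_⟩
  · ext c m
    simp only [coextCoact, TensorProduct.AlgebraTensorModule.curry_apply, LinearMap.comp_apply,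
      TensorProduct.curry_apply, LinearMap.coe_restrictScalars, TensorProduct.map_tmul,
      LinearMap.id_apply, LinearEquiv.coe_coe]
    induction C.comul c using TensorProduct.induction_on with
    | zero => simp
    | tmul x y => simp
    | add a b ha hb => simp only [TensorProduct.add_tmul, map_add, ha, hb]
  · apply quasiIso_of_cone
    intro x hx
    obtain ⟨s, hs⟩ := exists_contraction (coneD A.d B.d f)
      (coneD_sq _ _ _ (fun x => LinearMap.congr_fun A.d_sq x)
        (fun x => LinearMap.congr_fun B.d_sq x) hd)
      (cone_acyclic _ _ _ hd hq)
    have h0 : ∀ c ∈ C.grading 0, Ω.t.toFun c = 0 := by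
      intro c hc
      rw [hred.1] at hc
      obtain ⟨r, rfl⟩ := Submodule.mem_span_singleton.1 hc
      rw [map_smul, Ω.t_one, smul_zero]
    obtain ⟨p, hp⟩ := exists_mem_fil C.toDGCoalgebra A.carrier x.1
    obtain ⟨q, hq'⟩ := exists_mem_fil C.toDGCoalgebra B.carrier x.2
    exact coext_cone_acyclic Ω.t h0 A B f hf s hs (max p q) x
      (fil_mono _ _ (by simp) hp) (fil_mono _ _ (by simp) hq') hx

end
end
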